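/- arXiv:1705.00807 — 3 statements merged into one kernel-verified Lean document; each statement's English description precedes it below -/
import Mathlib

section
/- Let n be a positive integer, q ≥ 0, p ≥ 0, and let q̂ = X/n where X ~ Poisson(nq). Then |E|q̂ − p| − |q − p|| ≤ 2·min{p, q, √(p/n), √(q/n)}. Moreover, sup_{q ≥ 0} |E|q̂ − p| − |q − p|| ≥ (1/√2)·min{p, √(p/n)} (the supremum being over all choices of the Poisson mean parameter q, with q̂ = X/n, X ~ Poisson(nq)). -/
open scoped BigOperators

/-- The Poisson(lam) probability mass function on the nonnegative integers. -/
noncomputable def poissonPMF (lam : ℝ) (k : ℕ) : ℝ :=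
  Real.exp (-lam) * lam ^ k / (Nat.factorial k)

/-- Expectation of `f` under the Poisson(lam) distribution. -/
noncomputable def poissonE (lam : ℝ) (f : ℕ → ℝ) : ℝ :=
  ∑' k : ℕ, poissonPMF lam k * f k


lemma pois_nonneg {l : ℝ} (hl : 0 ≤ l) (k : ℕ) : 0 ≤ poissonPMF l k := by
  unfold poissonPMF; positivity

lemma pois_succ (l : ℝ) (k : ℕ) : poissonPMF l (k + 1) * ((k : ℝ) + 1) = l * poissonPMF l k := by
  unfold poissonPMF
  rw [Nat.factorial_succ]
  have h1 : ((k : ℝ) + 1) ≠ 0 := by positivity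
  have h2 : (Nat.factorial k : ℝ) ≠ 0 := by positivity
  push_cast
  field_simp
  ring

lemma pois_sum0 (l : ℝ) : HasSum (fun k => poissonPMF l k) 1 := by
  have h := (NormedSpace.expSeries_div_hasSum_exp l).mul_left (Real.exp (-l))
  rw [← Real.exp_eq_exp_ℝ, ← Real.exp_add, neg_add_cancel, Real.exp_zero] at h
  refine h.congr_fun ?_ |> fun h => h
  intro k
  unfold poissonPMF
  ring

lemma pois_sum1 (l : ℝ) : HasSum (fun k => poissonPMF l k * (k : ℝ)) l := by
  rw [← hasSum_nat_add_iff' 1]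
  have h := (pois_sum0 l).mul_left l
  simp only [Finset.range_one, Finset.sum_singleton, Nat.cast_zero, mul_zero, sub_zero,
    Nat.cast_add, Nat.cast_one, pois_succ]
  simpa using h

lemma pois_sum2 (l : ℝ) : HasSum (fun k => poissonPMF l k * (k : ℝ) ^ 2) (l ^ 2 + l) := by
  rw [← hasSum_nat_add_iff' 1]
  have h := ((pois_sum1 l).add (pois_sum0 l)).mul_left l
  have e : (fun k : ℕ => poissonPMF l (k + 1) * ((k + 1 : ℕ) : ℝ) ^ 2)
      = fun k : ℕ => l * (poissonPMF l k * (k : ℝ) + poissonPMF l k) := by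
    funext k
    have := pois_succ l k
    push_cast
    linear_combination ((k : ℝ) + 1) * this
  rw [e]
  have e2 : l ^ 2 + l - ∑ i ∈ Finset.range 1, poissonPMF l i * (i : ℝ) ^ 2 = l * (l + 1) := by
    simp
    ring
  rw [e2]
  exact h

lemma pois_quad (l α β γ : ℝ) :
    HasSum (fun k : ℕ => poissonPMF l k * (α + β * k + γ * (k : ℝ) ^ 2))
      (α + β * l + γ * (l ^ 2 + l)) := by
  have h := (((pois_sum0 l).mul_left α).add ((pois_sum1 l).mul_left β)).add
    ((pois_sum2 l).mul_left γ)
  have e1 : (fun k : ℕ => poissonPMF l k * (α + β * k + γ * (k : ℝ) ^ 2)) =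
      fun k : ℕ => α * poissonPMF l k + β * (poissonPMF l k * k)
        + γ * (poissonPMF l k * (k : ℝ) ^ 2) := by
    funext k; ring
  rw [e1, ← mul_one α]
  simpa using h

lemma pois_summable {l : ℝ} (hl : 0 ≤ l) (a : ℝ) :
    Summable (fun k : ℕ => poissonPMF l k * |(k : ℝ) - a|) := by
  refine Summable.of_nonneg_of_le
    (fun k => mul_nonneg (pois_nonneg hl k) (abs_nonneg _)) (fun k => ?_)
    (pois_quad l (|a|) 1 0).summable
  refine mul_le_mul_of_nonneg_left ?_ (pois_nonneg hl k)
  have := abs_sub (k : ℝ) a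
  rw [Nat.abs_cast] at this
  linarith

lemma pois_le {l : ℝ} (hl : 0 ≤ l) (a α β γ : ℝ)
    (h : ∀ k : ℕ, |(k : ℝ) - a| ≤ α + β * k + γ * (k : ℝ) ^ 2) :
    poissonE l (fun k => |(k : ℝ) - a|) ≤ α + β * l + γ * (l ^ 2 + l) := by
  unfold poissonE
  rw [← (pois_quad l α β γ).tsum_eq]
  exact (pois_summable hl a).tsum_le_tsum
    (fun k => mul_le_mul_of_nonneg_left (h k) (pois_nonneg hl k)) (pois_quad l α β γ).summable

lemma pois_ge {l : ℝ} (hl : 0 ≤ l) (a α β γ : ℝ)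
    (h : ∀ k : ℕ, α + β * k + γ * (k : ℝ) ^ 2 ≤ |(k : ℝ) - a|) :
    α + β * l + γ * (l ^ 2 + l) ≤ poissonE l (fun k => |(k : ℝ) - a|) := by
  unfold poissonE
  rw [← (pois_quad l α β γ).tsum_eq]
  exact (pois_quad l α β γ).summable.tsum_le_tsum
    (fun k => mul_le_mul_of_nonneg_left (h k) (pois_nonneg hl k)) (pois_summable hl a)

lemma bias_nonneg {l : ℝ} (hl : 0 ≤ l) (a : ℝ) :
    |l - a| ≤ poissonE l (fun k => |(k : ℝ) - a|) := by
  rw [abs_le']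
  constructor
  · have := pois_ge hl a (-a) 1 0 (fun k => by have := le_abs_self ((k : ℝ) - a); linarith)
    linarith
  · have := pois_ge hl a a (-1) 0 (fun k => by have := neg_le_abs ((k : ℝ) - a); linarith)
    linarith

lemma bias_lin {l a : ℝ} (hl : 0 ≤ l) (ha : 0 ≤ a) :
    poissonE l (fun k => |(k : ℝ) - a|) ≤ l + a := by
  have := pois_le hl a a 1 0 (fun k => by
    have h : (0 : ℝ) ≤ k := Nat.cast_nonneg k
    rw [abs_le]; constructor <;> linarith)
  linarith

lemma bias_sqrt {l : ℝ} (hl : 0 < l) (a : ℝ) :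
    poissonE l (fun k => |(k : ℝ) - a|) ≤ |l - a| + Real.sqrt l := by
  set c := Real.sqrt l with hc
  have hc0 : 0 < c := Real.sqrt_pos.2 hl
  have hcc : c ^ 2 = l := Real.sq_sqrt hl.le
  have := pois_le hl.le a (|l - a| + c / 2 + l ^ 2 / (2 * c)) (-(2 * l) / (2 * c)) (1 / (2 * c))
    (fun k => by
      have h1 : |(k : ℝ) - a| ≤ |(k : ℝ) - l| + |l - a| := abs_sub_le _ _ _
      have h2 : |(k : ℝ) - l| ≤ c / 2 + ((k : ℝ) - l) ^ 2 / (2 * c) := by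
        have e : c / 2 + ((k : ℝ) - l) ^ 2 / (2 * c) - |(k : ℝ) - l|
          = (|(k : ℝ) - l| - c) ^ 2 / (2 * c) := by
          rw [← sq_abs ((k : ℝ) - l)]; field_simp; ring
        have : 0 ≤ (|(k : ℝ) - l| - c) ^ 2 / (2 * c) := by positivity
        linarith
      have e : c / 2 + ((k : ℝ) - l) ^ 2 / (2 * c) + |l - a| =
         |l - a| + c / 2 + l ^ 2 / (2 * c) + -(2 * l) / (2 * c) * k + 1 / (2 * c) * (k : ℝ) ^ 2 := by
        field_simp; ring
      linarith)
  have e : |l - a| + c / 2 + l ^ 2 / (2 * c) + -(2 * l) / (2 * c) * l + 1 / (2 * c) * (l ^ 2 + l)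
      = |l - a| + c := by
    rw [← hcc]; field_simp; ring
  linarith

lemma bias_far {l a : ℝ} (ha : 0 ≤ a) (h : 4 * a < l) :
    poissonE l (fun k => |(k : ℝ) - a|) ≤ l - a + 2 / 3 := by
  have hd : 0 < l - a := by linarith
  have := pois_le (by linarith : 0 ≤ l) a (-a + l ^ 2 / (2 * (l - a)))
    (1 + -(2 * l) / (2 * (l - a))) (1 / (2 * (l - a)))
    (fun k => by
      have e : -a + l ^ 2 / (2 * (l - a)) + (1 + -(2 * l) / (2 * (l - a))) * k
         + 1 / (2 * (l - a)) * (k : ℝ) ^ 2 = k - a + ((k : ℝ) - l) ^ 2 / (2 * (l - a)) := by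
        field_simp; ring
      rw [e]
      have h0 : 0 ≤ ((k : ℝ) - l) ^ 2 / (2 * (l - a)) := by positivity
      have e2 : k - a + ((k : ℝ) - l) ^ 2 / (2 * (l - a)) + (k - a)
         = ((k : ℝ) - l + 2 * (l - a)) ^ 2 / (2 * (l - a)) := by
        field_simp; ring
      have h1 : 0 ≤ ((k : ℝ) - l + 2 * (l - a)) ^ 2 / (2 * (l - a)) := by positivity
      rw [abs_le]; constructor <;> linarith)
  have e : -a + l ^ 2 / (2 * (l - a)) + (1 + -(2 * l) / (2 * (l - a))) * l
         + 1 / (2 * (l - a)) * (l ^ 2 + l) = l - a + l / (2 * (l - a)) := by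
    field_simp; ring
  have : l / (2 * (l - a)) ≤ 2 / 3 := by
    rw [div_le_iff₀ (by linarith)]; linarith
  linarith

lemma bias_upper {l a : ℝ} (hl : 0 ≤ l) (ha : 0 ≤ a) :
    poissonE l (fun k => |(k : ℝ) - a|) - |l - a| ≤
      2 * min (min a l) (min (Real.sqrt a) (Real.sqrt l)) := by
  have hlin := bias_lin hl ha
  have h1 := le_abs_self (l - a)
  have h2 := neg_le_abs (l - a)
  set E := poissonE l (fun k => |(k : ℝ) - a|)
  have hs : E - |l - a| ≤ Real.sqrt l := by
    rcases hl.eq_or_lt with h | h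
    · have := Real.sqrt_nonneg l
      linarith
    · have := bias_sqrt h a
      linarith
  have hsl := Real.sqrt_nonneg l
  have hsa := Real.sqrt_nonneg a
  have hA : E - |l - a| ≤ 2 * Real.sqrt a := by
    rcases le_or_gt l (4 * a) with h | h
    · have : Real.sqrt l ≤ 2 * Real.sqrt a := by
        rw [Real.sqrt_le_left (by positivity), mul_pow, Real.sq_sqrt ha]
        linarith
      linarith
    · rcases le_or_gt (1 / 9) a with h9 | h9
      · have : (1 / 3 : ℝ) ≤ Real.sqrt a := Real.le_sqrt_of_sq_le (by linarith)
        have := bias_far ha h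
        linarith
      · have : a ≤ Real.sqrt a := Real.le_sqrt_of_sq_le (by nlinarith)
        linarith
  have : (E - |l - a|) / 2 ≤ min (min a l) (min (Real.sqrt a) (Real.sqrt l)) := by
    refine le_min (le_min ?_ ?_) (le_min ?_ ?_) <;> linarith
  linarith

lemma tele (a : ℝ) (m : ℕ) :
    ∑ k ∈ Finset.range (m + 1), poissonPMF a k * (a - k) =
      Real.exp (-a) * a ^ (m + 1) / (Nat.factorial m) := by
  induction m with
  | zero => simp [poissonPMF]
  | succ m ih =>
    rw [Finset.sum_range_succ, ih]
    unfold poissonPMF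
    rw [Nat.factorial_succ]
    have h1 : ((m : ℝ) + 1) ≠ 0 := by positivity
    have h2 : (Nat.factorial m : ℝ) ≠ 0 := by positivity
    push_cast
    field_simp
    ring

lemma mad_lower {a : ℝ} (ha : 0 ≤ a) (m : ℕ) :
    2 * (Real.exp (-a) * a ^ (m + 1) / (Nat.factorial m)) ≤
      poissonE a (fun k => |(k : ℝ) - a|) := by
  have hq := pois_quad a (-a) 1 0
  have hsum := (pois_summable ha a).sub hq.summable
  have e : poissonE a (fun k => |(k : ℝ) - a|) =
     ∑' k : ℕ, (poissonPMF a k * |(k : ℝ) - a| -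
        poissonPMF a k * (-a + 1 * k + 0 * (k : ℝ) ^ 2)) := by
    rw [(pois_summable ha a).tsum_sub hq.summable, hq.tsum_eq]
    unfold poissonE
    ring
  rw [e, ← tele, Finset.mul_sum]
  refine le_trans (Finset.sum_le_sum fun k _ => ?_)
    (hsum.sum_le_tsum (Finset.range (m + 1)) fun k _ => ?_)
  · have := mul_le_mul_of_nonneg_left (neg_le_abs ((k : ℝ) - a)) (pois_nonneg ha k)
    linarith
  · have := mul_le_mul_of_nonneg_left (le_abs_self ((k : ℝ) - a)) (pois_nonneg ha k)
    linarith

lemma stir (m : ℕ) (hm : 1 ≤ m) :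
    Real.log (Nat.factorial m) - ((m + 1 / 2) * Real.log m - m) ≤ 1 := by
  obtain ⟨j, rfl⟩ : ∃ j, m = j + 1 := ⟨m - 1, by omega⟩
  have h := Stirling.log_stirlingSeq'_antitone (Nat.zero_le j)
  simp only [Function.comp, Nat.succ_eq_add_one, Stirling.log_stirlingSeq_formula] at h
  have hp : ((j + 1 : ℕ) : ℝ) ≠ 0 := by positivity
  rw [Real.log_mul two_ne_zero hp, Real.log_div hp (Real.exp_ne_zero 1), Real.log_exp] at h
  simp at h
  push_cast
  linarith

lemma logbound {a : ℝ} (m : ℕ) (hm : 1 ≤ m) (h1 : (m : ℝ) ≤ a) (h2 : a ≤ m + 1) :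
    Real.log (Nat.factorial m) - 1 ≤ (m + 1 / 2) * Real.log a - a := by
  have hm0 : (0 : ℝ) < m := by exact_mod_cast hm
  have hA := stir m hm
  have hB := stir (m + 1) (by omega)
  rw [Nat.factorial_succ] at hB
  push_cast at hB
  rw [Real.log_mul (by positivity) (by positivity)] at hB
  have hc := strictConcaveOn_log_Ioi.concaveOn.2
    (Set.mem_Ioi.2 hm0) (Set.mem_Ioi.2 (by linarith : (0 : ℝ) < m + 1))
    (by linarith : (0 : ℝ) ≤ m + 1 - a) (by linarith : (0 : ℝ) ≤ a - m) (by ring)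
  simp only [smul_eq_mul] at hc
  have e : ((m : ℝ) + 1 - a) * m + (a - m) * (m + 1) = a := by ring
  rw [e] at hc
  have hc' := mul_le_mul_of_nonneg_left hc (by positivity : (0 : ℝ) ≤ m + 1 / 2)
  have hA' := mul_le_mul_of_nonneg_left hA (by linarith : (0 : ℝ) ≤ m + 1 - a)
  have hB' := mul_le_mul_of_nonneg_left hB (by linarith : (0 : ℝ) ≤ a - m)
  nlinarith

lemma inv_sqrt_two_le : 1 / Real.sqrt 2 ≤ 2 * Real.exp (-1) := by
  rw [Real.exp_neg, div_le_iff₀ (by positivity)]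
  have h := Real.exp_one_lt_d9
  have h2 : (1.4 : ℝ) ≤ Real.sqrt 2 := Real.le_sqrt_of_sq_le (by norm_num)
  have he := Real.exp_pos 1
  have : 2 * (Real.exp 1)⁻¹ * Real.sqrt 2 = 2 * Real.sqrt 2 / Real.exp 1 := by field_simp
  rw [this, le_div_iff₀ he]
  linarith

lemma mad_min {a : ℝ} (ha : 0 ≤ a) :
    1 / Real.sqrt 2 * min a (Real.sqrt a) ≤ poissonE a (fun k => |(k : ℝ) - a|) := by
  have hk := inv_sqrt_two_le
  have hpos : 0 ≤ 1 / Real.sqrt 2 := by positivity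
  rcases le_or_gt a 1 with h | h
  · have hm := mad_lower ha 0
    simp at hm
    have : Real.exp (-1) ≤ Real.exp (-a) := Real.exp_le_exp.2 (by linarith)
    calc 1 / Real.sqrt 2 * min a (Real.sqrt a) ≤ 1 / Real.sqrt 2 * a :=
          mul_le_mul_of_nonneg_left (min_le_left _ _) hpos
      _ ≤ (2 * Real.exp (-a)) * a := mul_le_mul_of_nonneg_right (by linarith) ha
      _ ≤ _ := by linarith
  · have ha0 : 0 < a := by linarith
    set m := ⌊a⌋₊ with hmdef
    have hm1 : 1 ≤ m := Nat.le_floor (by simpa using h.le)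
    have hb := logbound m hm1 (Nat.floor_le ha) (Nat.lt_floor_add_one a).le
    have hm := mad_lower ha m
    have hf : (0 : ℝ) < Nat.factorial m := by positivity
    have key : Real.exp (-1) * Real.sqrt a ≤ Real.exp (-a) * a ^ (m + 1) / (Nat.factorial m) := by
      rw [← Real.log_le_log_iff (by positivity) (by positivity),
        Real.log_mul (by positivity) (by positivity), Real.log_exp, Real.log_sqrt ha,
        Real.log_div (by positivity) (by positivity), Real.log_mul (by positivity) (by positivity),
        Real.log_exp, Real.log_pow]
      push_cast
      linarith
    calc 1 / Real.sqrt 2 * min a (Real.sqrt a) ≤ 1 / Real.sqrt 2 * Real.sqrt a :=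
          mul_le_mul_of_nonneg_left (min_le_right _ _) hpos
      _ ≤ (2 * Real.exp (-1)) * Real.sqrt a := mul_le_mul_of_nonneg_right hk (Real.sqrt_nonneg a)
      _ ≤ _ := by linarith

lemma scale_abs {N : ℝ} (hN : 0 < N) (x p : ℝ) : |x / N - p| = N⁻¹ * |x - N * p| := by
  rw [show x / N - p = N⁻¹ * (x - N * p) by field_simp, abs_mul, abs_of_pos (inv_pos.2 hN)]

lemma scale_E {N : ℝ} (hN : 0 < N) (l p : ℝ) :
    poissonE l (fun k => |(k : ℝ) / N - p|) = N⁻¹ * poissonE l (fun k => |(k : ℝ) - N * p|) := by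
  unfold poissonE
  rw [← tsum_mul_left]
  refine tsum_congr fun k => ?_
  simp only [scale_abs hN]
  ring

lemma scale_sqrt {N : ℝ} (hN : 0 < N) (p : ℝ) :
    Real.sqrt (p / N) = N⁻¹ * Real.sqrt (N * p) := by
  rw [show p / N = (N⁻¹) ^ 2 * (N * p) by field_simp, Real.sqrt_mul (by positivity),
    Real.sqrt_sq (by positivity)]

lemma scale_bias {N : ℝ} (hN : 0 < N) {q : ℝ} (hq : 0 ≤ q) (p : ℝ) :
    abs (poissonE (N * q) (fun k => |(k : ℝ) / N - p|) - |q - p|) =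
      N⁻¹ * (poissonE (N * q) (fun k => |(k : ℝ) - N * p|) - |N * q - N * p|) := by
  have h : |q - p| = N⁻¹ * |N * q - N * p| := by
    rw [← scale_abs hN]; congr 2; field_simp
  rw [h, scale_E hN, ← mul_sub, abs_of_nonneg]
  exact mul_nonneg (by positivity) (sub_nonneg.2 (bias_nonneg (by positivity) _))

/-- bias bounds for `E |q̂ - p|` where `q̂ = X/n`, `X ~ Poisson(nq)`,
together with a matching lower bound on the supremum over the Poisson mean parameter `q ≥ 0`. -/
theorem poisson_abs_bias (n : ℕ) (hn : 0 < n) (p : ℝ) (hp : 0 ≤ p) :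
    (∀ q : ℝ, 0 ≤ q →
      abs (poissonE (n * q) (fun k => |(k : ℝ) / n - p|) - |q - p|) ≤
        2 * min (min p q) (min (Real.sqrt (p / n)) (Real.sqrt (q / n)))) ∧
    (1 / Real.sqrt 2) * min p (Real.sqrt (p / n)) ≤
      ⨆ q : {q : ℝ // 0 ≤ q},
        abs (poissonE (n * (q : ℝ)) (fun k => |(k : ℝ) / n - p|) - |(q : ℝ) - p|) := by
  have hN : (0 : ℝ) < n := by exact_mod_cast hn
  have hi : (0 : ℝ) ≤ (n : ℝ)⁻¹ := by positivity
  have cancel : ∀ x : ℝ, (n : ℝ)⁻¹ * (n * x) = x := fun x => by field_simp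
  have upper : ∀ q : ℝ, 0 ≤ q →
      abs (poissonE (n * q) (fun k => |(k : ℝ) / n - p|) - |q - p|) ≤
        2 * min (min p q) (min (Real.sqrt (p / n)) (Real.sqrt (q / n))) := by
    intro q hq
    rw [scale_bias hN hq, scale_sqrt hN, scale_sqrt hN, ← mul_min_of_nonneg _ _ hi]
    have := mul_le_mul_of_nonneg_left
      (bias_upper (l := n * q) (a := n * p) (by positivity) (by positivity)) hi
    rwa [mul_left_comm, mul_min_of_nonneg _ _ hi, mul_min_of_nonneg (n * p) _ hi, cancel,
      cancel] at this
  refine ⟨upper, ?_⟩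
  have hbdd : BddAbove (Set.range fun q : {q : ℝ // 0 ≤ q} =>
      abs (poissonE (n * (q : ℝ)) (fun k => |(k : ℝ) / n - p|) - |(q : ℝ) - p|)) := by
    refine ⟨2 * p, ?_⟩
    rintro _ ⟨q, rfl⟩
    have h1 := upper q q.2
    have h2 : min (min p (q : ℝ)) (min (Real.sqrt (p / n)) (Real.sqrt (q / n))) ≤ p :=
      (min_le_left _ _).trans (min_le_left _ _)
    simp only
    linarith
  refine le_trans ?_ (le_ciSup hbdd ⟨p, hp⟩)
  simp only
  rw [scale_bias hN hp, scale_sqrt hN, sub_self, abs_zero, sub_zero]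
  have := mul_le_mul_of_nonneg_left (mad_min (a := n * p) (by positivity)) hi
  rwa [mul_left_comm, mul_min_of_nonneg _ _ hi, cancel] at this
end

section
/- Fix positive integers S and n and a probability vector Q = (q_1,…,q_S) ∈ M_S. In the Poisson sampling model with sample size n, the maximum likelihood (plug-in) estimator L_1(P_n,Q) = Σ_{i=1}^S |p̂_i − q_i| satisfies sup_{P ∈ M_S} E_P |L_1(P_n,Q) − L_1(P,Q)|² ≤ 4·(Σ_{i=1}^S min{q_i, √(q_i/n)})² + 1/n, and sup_{P ∈ M_S} E_P |L_1(P_n,Q) − L_1(P,Q)|² ≥ (1/2)·(Σ_{i=1}^S min{q_i, √(q_i/n)})². -/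
open scoped BigOperators ENNReal

/-- `P` is a probability vector on `{1,…,S}` (an element of `M_S`). -/
def IsDist {S : ℕ} (p : Fin S → ℝ) : Prop :=
  (∀ i, 0 ≤ p i) ∧ ∑ i, p i = 1

/-- Joint pmf of `S` independent coordinates `X_i ~ Poisson(n p_i)` (Poisson sampling model). -/
noncomputable def prodPMF {S : ℕ} (n : ℕ) (p : Fin S → ℝ) (x : Fin S → ℕ) : ℝ :=
  ∏ i, poissonPMF (n * p i) (x i)

/-- The `L₁` distance between two vectors. -/
noncomputable def L1dist {S : ℕ} (p q : Fin S → ℝ) : ℝ :=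
  ∑ i, |p i - q i|

/-- The mean squared error `E_P (est(X) - L)²` in the Poisson sampling model, valued in `ℝ≥0∞`. -/
noncomputable def risk {S : ℕ} (n : ℕ) (p : Fin S → ℝ) (L : ℝ) (est : (Fin S → ℕ) → ℝ) : ℝ≥0∞ :=
  ∑' x : Fin S → ℕ, ENNReal.ofReal (prodPMF n p x * (est x - L) ^ 2)

/-- The plug-in (MLE) estimator `L₁(P_n, Q) = Σ_i |X_i/n - q_i|` with `Q` known. -/
noncomputable def mleEst {S : ℕ} (n : ℕ) (q : Fin S → ℝ) (x : Fin S → ℕ) : ℝ :=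
  ∑ i, |(x i : ℝ) / n - q i|

namespace MleAux
open MeasureTheory ProbabilityTheory
open scoped NNReal

lemma hasSum_shift (r : ℝ) (g : ℕ → ℝ) (a : ℝ)
    (h : HasSum (fun n => Real.exp (-r) * r ^ n / (Nat.factorial n) * g (n + 1)) a) :
    HasSum (fun n => Real.exp (-r) * r ^ n / (Nat.factorial n) * (n * g n)) (r * a) := by
  rw [← hasSum_nat_add_iff' 1]
  have h2 := h.mul_left r
  simp only [Finset.range_one, Finset.sum_singleton, Nat.cast_zero, zero_mul, mul_zero, sub_zero]
  rw [show (fun n : ℕ => Real.exp (-r) * r ^ (n + 1) / (Nat.factorial (n + 1)) *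
      (((n + 1 : ℕ) : ℝ) * g (n + 1))) = _ from ?_]
  · exact h2
  funext n
  rw [Nat.factorial_succ]
  push_cast
  have : (n : ℝ) + 1 ≠ 0 := by positivity
  have : (Nat.factorial n : ℝ) ≠ 0 := by positivity
  field_simp
  ring

lemma hasSum_one (r : ℝ≥0) :
    HasSum (fun n : ℕ => Real.exp (-r) * (r : ℝ) ^ n / (Nat.factorial n) * (n : ℝ)) r := by
  have := hasSum_shift r (fun _ => 1) 1 (by simpa using hasSum_one_poissonMeasure r)
  simpa using this

lemma hasSum_two (r : ℝ≥0) :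
    HasSum (fun n : ℕ => Real.exp (-r) * (r : ℝ) ^ n / (Nat.factorial n) * ((n : ℝ) ^ 2))
      (r * (r + 1)) := by
  have h0 := (hasSum_one r).add (hasSum_one_poissonMeasure r)
  have := hasSum_shift r (fun n => n) (r + 1) (by
    convert h0 using 2 with n
    push_cast; ring)
  convert this using 2 with n
  ring

lemma int_one (r : ℝ≥0) : Integrable (fun n : ℕ => (n : ℝ)) (poissonMeasure r) := by
  rw [integrable_poissonMeasure_iff]
  simpa using (hasSum_one r).summable

lemma int_two (r : ℝ≥0) : Integrable (fun n : ℕ => (n : ℝ) ^ 2) (poissonMeasure r) := by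
  rw [integrable_poissonMeasure_iff]
  simpa using (hasSum_two r).summable

lemma mean_one (r : ℝ≥0) : ∫ n : ℕ, (n : ℝ) ∂(poissonMeasure r) = r := by
  rw [integral_poissonMeasure]; exact (hasSum_one r).tsum_eq

lemma mean_two (r : ℝ≥0) : ∫ n : ℕ, (n : ℝ) ^ 2 ∂(poissonMeasure r) = r * (r + 1) := by
  rw [integral_poissonMeasure]; exact (hasSum_two r).tsum_eq

/-- coordinate statistic -/
noncomputable def f (n : ℕ) (q : ℝ) (k : ℕ) : ℝ := |(k : ℝ) / n - q|

lemma int_lin (r : ℝ≥0) (n : ℕ) (q : ℝ) :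
    Integrable (fun k : ℕ => (k : ℝ) / n - q) (poissonMeasure r) :=
  ((int_one r).div_const _).sub (integrable_const _)

lemma int_f (r : ℝ≥0) (n : ℕ) (q : ℝ) : Integrable (f n q) (poissonMeasure r) :=
  (int_lin r n q).abs

lemma f_sq (n : ℕ) (q : ℝ) (k : ℕ) :
    (f n q k) ^ 2 = (k : ℝ) ^ 2 * (1 / (n : ℝ) ^ 2) - (k : ℝ) * (2 * q / n) + q ^ 2 := by
  rw [f, sq_abs]; ring

lemma memLp_f (r : ℝ≥0) (n : ℕ) (q : ℝ) : MemLp (f n q) 2 (poissonMeasure r) := by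
  rw [memLp_two_iff_integrable_sq (by fun_prop)]
  simp_rw [f_sq]
  exact (((int_two r).mul_const _).sub ((int_one r).mul_const _)).add (integrable_const _)

lemma mean_f_sq (r : ℝ≥0) (n : ℕ) (hn : 0 < n) (p q : ℝ) (hr : (r : ℝ) = n * p) :
    ∫ k, (f n q k) ^ 2 ∂(poissonMeasure r) = p / n + (p - q) ^ 2 := by
  simp_rw [f_sq]
  have hI : Integrable (fun k : ℕ => (k : ℝ) ^ 2 * (1 / (n : ℝ) ^ 2) - (k : ℝ) * (2 * q / n))
      (poissonMeasure r) := ((int_two r).mul_const _).sub ((int_one r).mul_const _)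
  rw [integral_add hI (integrable_const _), integral_sub ((int_two r).mul_const _) ((int_one r).mul_const _), integral_mul_const,
    integral_mul_const, mean_one, mean_two, hr]
  have : (n : ℝ) ≠ 0 := by positivity
  simp
  field_simp
  ring

lemma mean_lin (r : ℝ≥0) (n : ℕ) (hn : 0 < n) (p q : ℝ) (hr : (r : ℝ) = n * p) :
    ∫ k : ℕ, ((k : ℝ) / n - q) ∂(poissonMeasure r) = p - q := by
  rw [integral_sub ((int_one r).div_const _) (integrable_const _), integral_div, mean_one, hr]
  have : (n : ℝ) ≠ 0 := by positivity
  simp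
  field_simp

lemma var_f (r : ℝ≥0) (n : ℕ) (hn : 0 < n) (p q : ℝ) (hr : (r : ℝ) = n * p) :
    variance (f n q) (poissonMeasure r) =
      p / n + (p - q) ^ 2 - (∫ k, f n q k ∂(poissonMeasure r)) ^ 2 := by
  rw [variance_eq_sub (memLp_f r n q), ← mean_f_sq r n hn p q hr]
  rfl

lemma abs_le_mean (r : ℝ≥0) (n : ℕ) (hn : 0 < n) (p q : ℝ) (hr : (r : ℝ) = n * p) :
    |p - q| ≤ ∫ k, f n q k ∂(poissonMeasure r) := by
  rw [← mean_lin r n hn p q hr]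
  exact abs_integral_le_integral_abs

lemma mean_le (r : ℝ≥0) (n : ℕ) (hn : 0 < n) (p q : ℝ) (hq : 0 ≤ q) (hr : (r : ℝ) = n * p) :
    ∫ k, f n q k ∂(poissonMeasure r) ≤ p + q := by
  have h := mean_lin r n hn p (-q) hr
  rw [sub_neg_eq_add] at h
  rw [← h]
  refine integral_mono (int_f r n q) (int_lin r n (-q)) fun k => ?_
  have : (0 : ℝ) ≤ (k : ℝ) / n := by positivity
  simp only [f]
  rw [abs_le]; constructor <;> linarith

lemma var_le (r : ℝ≥0) (n : ℕ) (hn : 0 < n) (p q : ℝ) (hr : (r : ℝ) = n * p) :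
    variance (f n q) (poissonMeasure r) ≤ p / n := by
  rw [var_f r n hn p q hr]
  have := pow_le_pow_left₀ (abs_nonneg _) (abs_le_mean r n hn p q hr) 2
  rw [sq_abs] at this
  linarith

lemma bias_le (r : ℝ≥0) (n : ℕ) (hn : 0 < n) (p q : ℝ) (hq : 0 ≤ q)
    (hr : (r : ℝ) = n * p) :
    ∫ k, f n q k ∂(poissonMeasure r) - |p - q| ≤ 2 * min q (Real.sqrt (q / n)) := by
  have h1 := mean_le r n hn p q hq hr
  have h2 := variance_nonneg (f n q) (poissonMeasure r)
  rw [var_f r n hn p q hr] at h2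
  set M := ∫ k, f n q k ∂(poissonMeasure r)
  have hn' : (0 : ℝ) < n := by positivity
  have hA : M - |p - q| ≤ 2 * q := by
    rcases abs_cases (p - q) with ⟨h, _⟩ | ⟨h, _⟩ <;> rw [h] <;> linarith
  rcases le_total q (Real.sqrt (q / n)) with h | h
  · rw [min_eq_left h]; exact hA
  rw [min_eq_right h]
  rcases hq.eq_or_lt with h0 | h0
  · rw [← h0] at hA ⊢
    simpa using hA
  set s := Real.sqrt (q / n)
  have hs0 : 0 ≤ s := Real.sqrt_nonneg _
  have hs : s ^ 2 = q / n := Real.sq_sqrt (by positivity)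
  have habs := abs_nonneg (p - q)
  suffices hM : M ≤ |p - q| + 2 * s by linarith
  apply le_of_sq_le_sq _ (by positivity)
  have hsq := sq_abs (p - q)
  have key : p / n ≤ 4 * |p - q| * s + 4 * s ^ 2 := by
    rcases le_total p q with hpq | hpq
    · have : p / n ≤ q / n := by gcongr
      nlinarith [mul_nonneg habs hs0, sq_nonneg s]
    · have : 1 / (n : ℝ) ≤ s := by
        have h3 : s ^ 2 * n = q := by rw [hs]; field_simp
        rw [div_le_iff₀ hn']
        have hspos : 0 < s := Real.sqrt_pos.2 (by positivity)
        nlinarith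
      rw [abs_of_nonneg (by linarith)]
      have e : p / n = (p - q) * (1 / n) + s ^ 2 := by rw [hs]; ring
      rw [e]
      nlinarith [mul_le_mul_of_nonneg_left this (sub_nonneg.2 hpq), sq_nonneg s, mul_nonneg (sub_nonneg.2 hpq) hs0]
  nlinarith
end MleAux

namespace MleAux
open MeasureTheory ProbabilityTheory
open scoped NNReal

lemma fin_sum (r : ℝ) (k : ℕ) :
    ∑ j ∈ Finset.range (k + 1), Real.exp (-r) * r ^ j / (Nat.factorial j) * (r - j) =
      r * (Real.exp (-r) * r ^ k / (Nat.factorial k)) := by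
  induction k with
  | zero => simp; ring
  | succ k ih =>
    rw [Finset.sum_range_succ, ih, Nat.factorial_succ]
    push_cast
    have : (k : ℝ) + 1 ≠ 0 := by positivity
    have : (Nat.factorial k : ℝ) ≠ 0 := by positivity
    field_simp
    ring

lemma mean_ge (r : ℝ≥0) (n : ℕ) (hn : 0 < n) (q : ℝ) (hr : (r : ℝ) = n * q) (k : ℕ) :
    2 * (r * (Real.exp (-r) * (r : ℝ) ^ k / (Nat.factorial k))) ≤
      n * ∫ j, f n q j ∂(poissonMeasure r) := by
  have hn' : (0 : ℝ) < n := by positivity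
  have h1 := (hasSum_integral_poissonMeasure (int_f r n q)).mul_left (n : ℝ)
  have h2 : HasSum (fun j : ℕ => if j ∈ Finset.range (k + 1) then
      Real.exp (-r) * (r : ℝ) ^ j / (Nat.factorial j) * (r - j) else 0)
      (r * (Real.exp (-r) * (r : ℝ) ^ k / (Nat.factorial k))) := by
    rw [← fin_sum r k]
    rw [← Finset.sum_congr rfl (fun j hj => if_pos hj)]
    exact hasSum_sum_of_ne_finset_zero fun j hj => if_neg hj
  have h3 := ((hasSum_one r).sub ((hasSum_one_poissonMeasure r).mul_right (r : ℝ))).add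
    (h2.mul_left 2)
  have h4 := hasSum_le (fun j => ?_) h3 h1
  · linarith
  · have hw : 0 ≤ Real.exp (-r) * (r : ℝ) ^ j / (Nat.factorial j) := by positivity
    set w := Real.exp (-r) * (r : ℝ) ^ j / (Nat.factorial j)
    have e : (n : ℝ) * (w • f n q j) = w * |(j : ℝ) - r| := by
      have : (j : ℝ) - r = n * ((j : ℝ) / n - q) := by rw [hr]; field_simp
      rw [this, abs_mul, abs_of_pos hn', f, smul_eq_mul]; ring
    rw [e]
    split_ifs
    · have := mul_le_mul_of_nonneg_left (neg_abs_le ((j : ℝ) - r)) hw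
      nlinarith
    · have := mul_le_mul_of_nonneg_left (le_abs_self ((j : ℝ) - r)) hw
      nlinarith

lemma log_fact_le (k : ℕ) (hk : 1 ≤ k) :
    Real.log (Nat.factorial k) ≤ 1 + (k + 1 / 2) * Real.log k - k := by
  obtain ⟨m, rfl⟩ : ∃ m, k = m + 1 := ⟨k - 1, by omega⟩
  have h := Stirling.log_stirlingSeq'_antitone (Nat.zero_le m)
  simp only [Function.comp, Nat.succ_eq_add_one, zero_add] at h
  have e1 : Real.log (Real.exp 1 / Real.sqrt 2) = 1 - Real.log 2 / 2 := by
    rw [Real.log_div (by positivity) (by positivity), Real.log_exp, Real.log_sqrt (by positivity)]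
  have e2 : Real.log (((m + 1 : ℕ) : ℝ) / Real.exp 1) = Real.log ((m + 1 : ℕ) : ℝ) - 1 := by
    rw [Real.log_div (by positivity) (by positivity), Real.log_exp]
  rw [Stirling.log_stirlingSeq_formula, Stirling.stirlingSeq_one, e1, e2,
    Real.log_mul (by positivity) (by positivity)] at h
  linarith

lemma log_fact_le' (k : ℕ) (hk : 1 ≤ k) (r : ℝ) (h1 : k ≤ r) (h2 : r ≤ k + 1) :
    Real.log (Nat.factorial k) ≤ 1 + (k + 1 / 2) * Real.log r - r := by
  have hk' : (1 : ℝ) ≤ k := by exact_mod_cast hk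
  have ha := log_fact_le k hk
  have hb := log_fact_le (k + 1) (by omega)
  rw [Nat.factorial_succ] at hb
  push_cast at hb
  rw [Real.log_mul (by positivity) (by positivity)] at hb
  have hc := strictConcaveOn_log_Ioi.concaveOn.2 (show (k : ℝ) ∈ Set.Ioi 0 by simp; omega)
    (show (k : ℝ) + 1 ∈ Set.Ioi 0 by simp; positivity) (show 0 ≤ k + 1 - r by linarith)
    (show 0 ≤ r - k by linarith) (by ring)
  simp only [smul_eq_mul] at hc
  rw [show (k + 1 - r) * (k : ℝ) + (r - k) * (k + 1) = r by ring] at hc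
  nlinarith [mul_le_mul_of_nonneg_left ha (show 0 ≤ k + 1 - r by linarith),
    mul_le_mul_of_nonneg_left hb (show 0 ≤ r - k by linarith)]

lemma pmf_ge (r : ℝ) (hr : 0 ≤ r) : ∃ k : ℕ,
    Real.exp (-1) * min r (Real.sqrt r) ≤
      r * (Real.exp (-r) * r ^ k / (Nat.factorial k)) := by
  rcases le_total r 1 with h | h
  · refine ⟨0, ?_⟩
    have h1 : Real.exp (-1) ≤ Real.exp (-r) := Real.exp_le_exp.2 (by linarith)
    have h2 := min_le_left r (Real.sqrt r)
    have h3 : 0 ≤ min r (Real.sqrt r) := le_min hr (Real.sqrt_nonneg _)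
    have := Real.exp_pos (-1)
    simp
    rw [mul_comm r]
    gcongr
  · refine ⟨⌊r⌋₊, ?_⟩
    have hk : 1 ≤ ⌊r⌋₊ := Nat.le_floor (by simpa using h)
    have hl := log_fact_le' ⌊r⌋₊ hk r (Nat.floor_le hr) (Nat.lt_floor_add_one r).le
    set k := ⌊r⌋₊
    have hr0 : 0 < r := by linarith
    refine le_trans (mul_le_mul_of_nonneg_left (min_le_right _ _) (Real.exp_pos _).le) ?_
    rw [← Real.log_le_log_iff (by positivity) (by positivity),
      Real.log_mul (by positivity) (by positivity), Real.log_exp, Real.log_sqrt hr,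
      Real.log_mul (by positivity) (by positivity), Real.log_div (by positivity) (by positivity),
      Real.log_mul (by positivity) (by positivity), Real.log_exp, Real.log_pow]
    linarith

lemma mean_lower (r : ℝ≥0) (n : ℕ) (hn : 0 < n) (q : ℝ) (hq : 0 ≤ q) (hr : (r : ℝ) = n * q) :
    2 * Real.exp (-1) * min q (Real.sqrt (q / n)) ≤ ∫ j, f n q j ∂(poissonMeasure r) := by
  have hn' : (0 : ℝ) < n := by positivity
  obtain ⟨k, hk⟩ := pmf_ge r r.2
  have h := mean_ge r n hn q hr k
  have e : min (r : ℝ) (Real.sqrt r) = n * min q (Real.sqrt (q / n)) := by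
    rw [mul_min_of_nonneg _ _ hn'.le, hr]
    congr 1
    rw [show (n : ℝ) * q = n ^ 2 * (q / n) by field_simp, Real.sqrt_mul (by positivity),
      Real.sqrt_sq hn'.le]
  rw [e] at hk
  refine le_of_mul_le_mul_left ?_ hn'
  linarith

lemma exp_const : 1 / 2 ≤ (2 * Real.exp (-1)) ^ 2 := by
  have h := Real.exp_one_lt_d9
  rw [Real.exp_neg]
  have h0 := Real.exp_pos 1
  rw [mul_pow, inv_pow, ← div_eq_mul_inv, div_le_div_iff₀ (by positivity) (by positivity)]
  nlinarith

/-- sampling law -/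
noncomputable def law {S : ℕ} (n : ℕ) (p : Fin S → ℝ) : Measure (Fin S → ℕ) :=
  Measure.pi fun i => poissonMeasure (Real.toNNReal (n * p i))

instance {S : ℕ} (n : ℕ) (p : Fin S → ℝ) : IsProbabilityMeasure (law n p) := by
  unfold law; infer_instance

lemma law_singleton {S : ℕ} (n : ℕ) (p : Fin S → ℝ) (hp : ∀ i, 0 ≤ p i) (x : Fin S → ℕ) :
    law n p {x} = ENNReal.ofReal (prodPMF n p x) := by
  have h : ∀ i, ((Real.toNNReal (n * p i) : ℝ≥0) : ℝ) = n * p i := fun i =>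
    Real.coe_toNNReal _ (mul_nonneg (Nat.cast_nonneg _) (hp i))
  rw [law, Measure.pi_singleton, prodPMF, ENNReal.ofReal_prod_of_nonneg]
  · refine Finset.prod_congr rfl fun i _ => ?_
    rw [poissonMeasure_singleton, h]; rfl
  · intro i _
    have := mul_nonneg (Nat.cast_nonneg (α := ℝ) n) (hp i)
    unfold _root_.poissonPMF
    positivity

lemma prodPMF_nonneg {S : ℕ} (n : ℕ) (p : Fin S → ℝ) (hp : ∀ i, 0 ≤ p i) (x : Fin S → ℕ) :
    0 ≤ prodPMF n p x := by
  refine Finset.prod_nonneg fun i _ => ?_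
  have := mul_nonneg (Nat.cast_nonneg (α := ℝ) n) (hp i)
  unfold _root_.poissonPMF
  positivity

lemma risk_eq {S : ℕ} (n : ℕ) (p q : Fin S → ℝ) (hp : ∀ i, 0 ≤ p i) (L : ℝ) :
    risk n p L (mleEst n q) = ENNReal.ofReal
      ((∑ i, variance (f n (q i)) (poissonMeasure (Real.toNNReal (n * p i)))) +
        (∑ i, ∫ k, f n (q i) k ∂(poissonMeasure (Real.toNNReal (n * p i))) - L) ^ 2) := by
  have hm : ∀ i, MemLp (fun x : Fin S → ℕ => f n (q i) (x i)) 2 (law n p) := fun i =>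
    (memLp_f _ n (q i)).comp_measurePreserving (measurePreserving_eval _ i)
  have hZ : mleEst n q = ∑ i, fun x : Fin S → ℕ => f n (q i) (x i) := by
    funext x; simp [mleEst, f]
  have hZm : MemLp (mleEst n q) 2 (law n p) := by
    rw [hZ]; exact memLp_finsetSum' _ fun i _ => hm i
  have hV : variance (mleEst n q) (law n p) =
      ∑ i, variance (f n (q i)) (poissonMeasure (Real.toNNReal (n * p i))) := by
    rw [hZ]; exact variance_sum_pi fun i => memLp_f _ n (q i)
  have hE : ∫ x, mleEst n q x ∂(law n p) =
      ∑ i, ∫ k, f n (q i) k ∂(poissonMeasure (Real.toNNReal (n * p i))) := by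
    have : ∀ x, mleEst n q x = ∑ i, f n (q i) (x i) := fun x => rfl
    simp_rw [this]
    rw [integral_finsetSum _ fun i _ => (hm i).integrable one_le_two]
    refine Finset.sum_congr rfl fun i _ => ?_
    exact integral_comp_eval (μ := fun i => poissonMeasure (Real.toNNReal (n * p i)))
      (by fun_prop)
  have hW : MemLp (fun x => mleEst n q x - L) 2 (law n p) := hZm.sub (memLp_const L)
  have hS : ∫ x, (mleEst n q x - L) ^ 2 ∂(law n p) =
      variance (mleEst n q) (law n p) + (∫ x, mleEst n q x ∂(law n p) - L) ^ 2 := by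
    have h1 := variance_eq_sub hW
    rw [variance_sub_const hZm.1, integral_sub (hZm.integrable one_le_two) (integrable_const _)] at h1
    simp at h1
    rw [h1]; ring
  rw [← hV, ← hE, ← hS, ofReal_integral_eq_lintegral_ofReal hW.integrable_sq
    (Filter.Eventually.of_forall fun x => sq_nonneg _), lintegral_countable', risk]
  refine tsum_congr fun x => ?_
  rw [law_singleton n p hp, ENNReal.ofReal_mul (prodPMF_nonneg n p hp x), mul_comm]

end MleAux

/-- risk bounds for the MLE `L₁(P_n, Q)` with `Q` known. -/
theorem mle_risk_bounds (S n : ℕ) (hS : 0 < S) (hn : 0 < n)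
    (q : Fin S → ℝ) (hq : IsDist q) :
    (⨆ p : {p : Fin S → ℝ // IsDist p}, risk n p.1 (L1dist p.1 q) (mleEst n q)) ≤
      ENNReal.ofReal (4 * (∑ i, min (q i) (Real.sqrt (q i / n))) ^ 2 + 1 / n) ∧
    ENNReal.ofReal ((1 / 2) * (∑ i, min (q i) (Real.sqrt (q i / n))) ^ 2) ≤
      ⨆ p : {p : Fin S → ℝ // IsDist p}, risk n p.1 (L1dist p.1 q) (mleEst n q) := by
  have hc : ∀ p : Fin S → ℝ, IsDist p → ∀ i, ((Real.toNNReal (n * p i) : NNReal) : ℝ) = n * p i :=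
    fun p hp i => Real.coe_toNNReal _ (mul_nonneg (Nat.cast_nonneg _) (hp.1 i))
  constructor
  · refine iSup_le fun ⟨p, hp⟩ => ?_
    rw [MleAux.risk_eq n p q hp.1]
    apply ENNReal.ofReal_le_ofReal
    have h1 : ∑ i, ProbabilityTheory.variance (MleAux.f n (q i))
        (ProbabilityTheory.poissonMeasure (Real.toNNReal (n * p i))) ≤ 1 / n := by
      rw [← hp.2, Finset.sum_div]
      exact Finset.sum_le_sum fun i _ => MleAux.var_le _ n hn _ _ (hc p hp i)
    rw [L1dist, ← Finset.sum_sub_distrib]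
    have h2 := Finset.sum_le_sum fun i (_ : i ∈ Finset.univ) =>
      MleAux.bias_le _ n hn _ _ (hq.1 i) (hc p hp i)
    have h3 := Finset.sum_nonneg fun i (_ : i ∈ Finset.univ) =>
      sub_nonneg.2 (MleAux.abs_le_mean _ n hn _ (q i) (hc p hp i))
    have h4 := pow_le_pow_left₀ h3 h2 2
    rw [← Finset.mul_sum, mul_pow] at h4
    linarith
  · refine le_iSup_of_le ⟨q, hq⟩ ?_
    rw [MleAux.risk_eq n q q hq.1]
    apply ENNReal.ofReal_le_ofReal
    have h1 := Finset.sum_nonneg fun i (_ : i ∈ Finset.univ) =>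
      ProbabilityTheory.variance_nonneg (MleAux.f n (q i))
        (ProbabilityTheory.poissonMeasure (Real.toNNReal (n * q i)))
    have h2 := Finset.sum_le_sum fun i (_ : i ∈ Finset.univ) =>
      MleAux.mean_lower _ n hn _ (hq.1 i) (hc q hq i)
    rw [← Finset.mul_sum] at h2
    have h0 : 0 ≤ ∑ i, min (q i) (Real.sqrt (q i / n)) :=
      Finset.sum_nonneg fun i _ => le_min (hq.1 i) (Real.sqrt_nonneg _)
    have h3 := pow_le_pow_left₀ (by positivity) h2 2
    rw [mul_pow] at h3
    have h4 := mul_le_mul_of_nonneg_right MleAux.exp_const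
      (sq_nonneg (∑ i, min (q i) (Real.sqrt (q i / n))))
    have h5 : L1dist q q = 0 := by simp [L1dist]
    rw [h5, sub_zero]
    linarith
end

section
/- For every 0 < ε < 1 and β > 0 there exists a constant C > 0 such that for every integer n ≥ 2, every integer S ≥ 1, and every Q ∈ M_S, there exists an estimator L̂ : ℕ^S → ℝ such that, in the Poisson sampling model with sample size n, sup_{P ∈ M_S} E_P (L̂(X) − L_1(P,Q))² ≤ C·[ (Σ_{i=1}^S min{q_i, √(q_i/(n ln n))})² + (ln n)/n^{1−ε} + S/n^β ]. -/
open scoped BigOperators ENNReal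

/-- Unbiased estimator of `cos (u √λ)` from a Poisson(λ) count. -/
noncomputable def cEst (x : ℕ) (u : ℝ) : ℝ :=
  ∑ j ∈ Finset.range (x + 1),
    (-1 : ℝ) ^ j * (x.descFactorial j : ℝ) * u ^ (2 * j) / ((2 * j).factorial : ℝ)

/-- Unbiased estimator of `sin (u √λ) / √λ` from a Poisson(λ) count. -/
noncomputable def sEst (x : ℕ) (u : ℝ) : ℝ :=
  ∑ j ∈ Finset.range (x + 1),
    (-1 : ℝ) ^ j * (x.descFactorial j : ℝ) * u ^ (2 * j + 1) / ((2 * j + 1).factorial : ℝ)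

lemma cast_descFactorial_succ (x j : ℕ) :
    (x.descFactorial (j + 1) : ℝ) = ((x : ℝ) - j) * x.descFactorial j := by
  rw [Nat.descFactorial_succ]
  rcases le_or_gt j x with h | h
  · push_cast [Nat.cast_sub h]; ring
  · rw [Nat.descFactorial_eq_zero_iff_lt.2 h]; simp

lemma hasDerivAt_sEst (x : ℕ) (u : ℝ) : HasDerivAt (sEst x) (cEst x u) u := by
  unfold sEst cEst
  refine HasDerivAt.fun_sum fun j _ => ?_
  have h := ((hasDerivAt_pow (2 * j + 1) u).const_mul
    ((-1 : ℝ) ^ j * (x.descFactorial j : ℝ))).div_const ((2 * j + 1).factorial : ℝ)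
  convert! h using 1
  rw [Nat.factorial_succ]
  have : ((2 * j).factorial : ℝ) ≠ 0 := by positivity
  have h2 : ((2 * j + 1 : ℕ) : ℝ) ≠ 0 := by positivity
  rw [Nat.add_sub_cancel, Nat.cast_mul]
  field_simp

lemma hasDerivAt_cEst (x : ℕ) (u : ℝ) :
    HasDerivAt (cEst x) (-((x : ℝ) + 1 / 2) * sEst x u + u / 2 * cEst x u) u := by
  have h : HasDerivAt (cEst x) (∑ j ∈ Finset.range (x + 1),
      (-1 : ℝ) ^ j * (x.descFactorial j : ℝ) * (((2 * j : ℕ) : ℝ) * u ^ (2 * j - 1)) /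
        ((2 * j).factorial : ℝ)) u := by
    unfold cEst
    refine HasDerivAt.fun_sum fun j _ => ?_
    exact ((hasDerivAt_pow (2 * j) u).const_mul _).div_const _
  convert! h using 1
  have h3 : ∑ j ∈ Finset.range (x + 1 + 1),
      (-1 : ℝ) ^ j * (x.descFactorial j : ℝ) * (((2 * j : ℕ) : ℝ) * u ^ (2 * j - 1)) /
        ((2 * j).factorial : ℝ) = ∑ j ∈ Finset.range (x + 1),
      (-1 : ℝ) ^ j * (x.descFactorial j : ℝ) * (((2 * j : ℕ) : ℝ) * u ^ (2 * j - 1)) /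
        ((2 * j).factorial : ℝ) := by
    rw [Finset.sum_range_succ, Nat.descFactorial_eq_zero_iff_lt.2 (Nat.lt_succ_self x)]
    simp
  rw [← h3, Finset.sum_range_succ']
  simp only [sEst, cEst, Finset.mul_sum]
  rw [← Finset.sum_add_distrib]
  simp only [Nat.cast_zero, zero_mul, mul_zero, zero_div, add_zero]
  refine Finset.sum_congr rfl fun j _ => ?_
  rw [cast_descFactorial_succ]
  have e1 : 2 * (j + 1) - 1 = 2 * j + 1 := by omega
  have e2 : 2 * (j + 1) = (2 * j + 1) + 1 := by ring
  rw [e1, e2, Nat.factorial_succ (2 * j + 1), Nat.factorial_succ (2 * j)]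
  have : ((2 * j).factorial : ℝ) ≠ 0 := by positivity
  push_cast
  have h4 : (2 * (j : ℝ) + 1) ≠ 0 := by positivity
  have h5 : (2 * (j : ℝ) + 1 + 1) ≠ 0 := by positivity
  field_simp
  ring

lemma cEst_succ_sub (x : ℕ) (u : ℝ) :
    cEst (x + 1) u - cEst x u = -(u / 2) * sEst x u := by
  have h3 : cEst x u = ∑ j ∈ Finset.range (x + 1 + 1),
      (-1 : ℝ) ^ j * (x.descFactorial j : ℝ) * u ^ (2 * j) / ((2 * j).factorial : ℝ) := by
    rw [Finset.sum_range_succ, Nat.descFactorial_eq_zero_iff_lt.2 (Nat.lt_succ_self x)]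
    simp [cEst]
  rw [h3]
  unfold cEst sEst
  rw [← Finset.sum_sub_distrib, Finset.sum_range_succ', Finset.mul_sum]
  simp only [Nat.descFactorial_zero, sub_self, add_zero]
  refine Finset.sum_congr rfl fun j _ => ?_
  rw [Nat.succ_descFactorial_succ, cast_descFactorial_succ]
  have e2 : 2 * (j + 1) = (2 * j + 1) + 1 := by ring
  rw [e2, Nat.factorial_succ (2 * j + 1)]
  have : ((2 * j + 1).factorial : ℝ) ≠ 0 := by positivity
  push_cast
  have h5 : (2 * (j : ℝ) + 1 + 1) ≠ 0 := by positivity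
  field_simp
  ring

lemma energy_bound (x : ℕ) {u : ℝ} (hu : 0 ≤ u) :
    cEst x u ^ 2 + ((x : ℝ) + 1 / 2) * sEst x u ^ 2 ≤ Real.exp (u ^ 2 / 2) := by
  let F : ℝ → ℝ := fun v =>
    (cEst x v ^ 2 + ((x : ℝ) + 1 / 2) * sEst x v ^ 2) * Real.exp (-(v ^ 2 / 2))
  have hF : ∀ v, HasDerivAt F
      (-(v * ((x : ℝ) + 1 / 2) * sEst x v ^ 2 * Real.exp (-(v ^ 2 / 2)))) v := by
    intro v
    have h1 := (((hasDerivAt_cEst x v).fun_pow 2).add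
      (((hasDerivAt_sEst x v).fun_pow 2).const_mul ((x : ℝ) + 1 / 2))).mul
      (((hasDerivAt_pow 2 v).div_const 2).fun_neg.exp)
    convert! h1 using 1
    simp
    ring
  have hanti : AntitoneOn F (Set.Ici 0) := by
    apply antitoneOn_of_deriv_nonpos (convex_Ici 0)
    · exact fun v _ => (hF v).continuousAt.continuousWithinAt
    · exact fun v _ => (hF v).differentiableAt.differentiableWithinAt
    · intro v hv
      rw [interior_Ici] at hv
      rw [(hF v).deriv]
      have : (0:ℝ) < v := hv
      have : 0 ≤ v * ((x : ℝ) + 1 / 2) * sEst x v ^ 2 * Real.exp (-(v ^ 2 / 2)) := by positivity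
      linarith
  have h0 : F 0 = 1 := by
    have a : cEst x 0 = 1 := by
      unfold cEst
      rw [Finset.sum_range_succ']
      simp
    have b : sEst x 0 = 0 := by
      unfold sEst
      simp
    simp [F, a, b]
  have h := hanti (Set.mem_Ici.2 le_rfl) (Set.mem_Ici.2 hu) hu
  rw [h0] at h
  have h2 : (cEst x u ^ 2 + ((x : ℝ) + 1 / 2) * sEst x u ^ 2) * Real.exp (-(u ^ 2 / 2)) ≤ 1 := h
  rw [Real.exp_neg, ← div_eq_mul_inv, div_le_one (Real.exp_pos _)] at h2
  exact h2

lemma abs_cEst_le (x : ℕ) {u : ℝ} (hu : 0 ≤ u) : |cEst x u| ≤ Real.exp (u ^ 2 / 4) := by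
  have h := energy_bound x hu
  have e : Real.exp (u ^ 2 / 2) = Real.exp (u ^ 2 / 4) ^ 2 := by
    rw [← Real.exp_nat_mul]; congr 1; push_cast; ring
  rw [e] at h
  have : 0 ≤ ((x : ℝ) + 1 / 2) * sEst x u ^ 2 := by positivity
  exact abs_le_of_sq_le_sq (by linarith) (Real.exp_pos _).le

lemma abs_sEst_le (x : ℕ) {u : ℝ} (hu : 0 ≤ u) :
    |sEst x u| ≤ Real.exp (u ^ 2 / 4) / Real.sqrt ((x : ℝ) + 1 / 2) := by
  have h := energy_bound x hu
  have e : Real.exp (u ^ 2 / 2) = Real.exp (u ^ 2 / 4) ^ 2 := by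
    rw [← Real.exp_nat_mul]; congr 1; push_cast; ring
  rw [e] at h
  have hx : (0:ℝ) < (x : ℝ) + 1 / 2 := by positivity
  rw [le_div_iff₀ (Real.sqrt_pos.2 hx)]
  have : 0 ≤ cEst x u ^ 2 := sq_nonneg _
  have h2 : |sEst x u| * Real.sqrt ((x : ℝ) + 1 / 2) =
      |sEst x u * Real.sqrt ((x : ℝ) + 1 / 2)| := by
    rw [abs_mul, abs_of_nonneg (Real.sqrt_nonneg _)]
  rw [h2]
  apply abs_le_of_sq_le_sq _ (Real.exp_pos _).le
  rw [mul_pow, Real.sq_sqrt hx.le]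
  linarith

lemma abs_cEst_succ_sub_le (x : ℕ) {u : ℝ} (hu : 0 ≤ u) :
    |cEst (x + 1) u - cEst x u| ≤
      (u / 2 * Real.exp (u ^ 2 / 4)) / Real.sqrt ((x : ℝ) + 1 / 2) := by
  rw [cEst_succ_sub, abs_mul, abs_neg, abs_of_nonneg (by positivity : 0 ≤ u / 2), mul_div_assoc]
  exact mul_le_mul_of_nonneg_left (abs_sEst_le x hu) (by positivity)

/-- Fourier frequency. -/
noncomputable def fFreq (P : ℝ) (k : ℕ) : ℝ := 2 * Real.pi * k / P

/-- Fourier coefficients of `(τ² - t²)₊`, period `P`. -/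
noncomputable def fCoef (P τ : ℝ) (k : ℕ) : ℝ :=
  8 / P * ((Real.sin (fFreq P k * τ) - fFreq P k * τ * Real.cos (fFreq P k * τ)) / fFreq P k ^ 3)

lemma bern2 (x : ℝ) : (Polynomial.map (algebraMap ℚ ℝ) (Polynomial.bernoulli 2)).eval x
    = x ^ 2 - x + 1 / 6 := by
  simp [Polynomial.bernoulli, Finset.sum_range_succ, bernoulli]
  ring

lemma bern3 (x : ℝ) : (Polynomial.map (algebraMap ℚ ℝ) (Polynomial.bernoulli 3)).eval x
    = x ^ 3 - 3 / 2 * x ^ 2 + x / 2 := by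
  simp [Polynomial.bernoulli, Finset.sum_range_succ, bernoulli]
  norm_num [bernoulli'_two, bernoulli'_three, Nat.choose]
  ring

lemma hasSum_cos2 {x : ℝ} (hx : x ∈ Set.Icc (0:ℝ) 1) :
    HasSum (fun n : ℕ => 1 / (n : ℝ) ^ 2 * Real.cos (2 * Real.pi * n * x))
      (Real.pi ^ 2 * (x ^ 2 - x + 1 / 6)) := by
  have h := hasSum_one_div_nat_pow_mul_cos one_ne_zero hx
  rw [mul_one, bern2] at h
  convert! h using 1
  simp only [Nat.factorial]
  push_cast
  ring

lemma hasSum_sin3 {x : ℝ} (hx : x ∈ Set.Icc (0:ℝ) 1) :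
    HasSum (fun n : ℕ => 1 / (n : ℝ) ^ 3 * Real.sin (2 * Real.pi * n * x))
      (2 * Real.pi ^ 3 / 3 * (x ^ 3 - 3 / 2 * x ^ 2 + x / 2)) := by
  have h := hasSum_one_div_nat_pow_mul_sin one_ne_zero hx
  norm_num only [Nat.factorial] at h
  rw [bern3] at h
  convert! h using 1
  ring

lemma hasSum_fourier {P τ t : ℝ} (hP : 0 < P) (hτ : 0 ≤ τ) (ht : 0 ≤ t) (h : τ + t ≤ P) :
    HasSum (fun k : ℕ => fCoef P τ k * Real.cos (fFreq P k * t))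
      (max (τ ^ 2 - t ^ 2) 0 - 4 * τ ^ 3 / (3 * P)) := by
  have hpi := Real.pi_pos
  have term : ∀ (k : ℕ), fCoef P τ k * Real.cos (fFreq P k * t) =
      P ^ 2 / (2 * Real.pi ^ 3) * (1 / (k : ℝ) ^ 3 * Real.sin (2 * Real.pi * k * ((τ + t) / P)))
      + P ^ 2 / (2 * Real.pi ^ 3) * (1 / (k : ℝ) ^ 3 * Real.sin (2 * Real.pi * k * ((τ - t) / P)))
      - P * τ / Real.pi ^ 2 * (1 / (k : ℝ) ^ 2 * Real.cos (2 * Real.pi * k * ((τ + t) / P)))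
      - P * τ / Real.pi ^ 2 * (1 / (k : ℝ) ^ 2 * Real.cos (2 * Real.pi * k * ((τ - t) / P))) := by
    intro k
    rcases Nat.eq_zero_or_pos k with rfl | hk
    · simp [fCoef, fFreq]
    have hk' : (k : ℝ) ≠ 0 := by positivity
    unfold fCoef
    have e1 : 2 * Real.pi * k * ((τ + t) / P) = fFreq P k * τ + fFreq P k * t := by
      unfold fFreq; field_simp
    have e2 : 2 * Real.pi * k * ((τ - t) / P) = fFreq P k * τ - fFreq P k * t := by
      unfold fFreq; field_simp
    rw [e1, e2, Real.sin_add, Real.sin_sub, Real.cos_add, Real.cos_sub]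
    generalize Real.sin (fFreq P k * τ) = a
    generalize Real.cos (fFreq P k * τ) = b
    generalize Real.sin (fFreq P k * t) = c
    generalize Real.cos (fFreq P k * t) = d
    unfold fFreq
    field_simp
    ring
  have hx : (τ + t) / P ∈ Set.Icc (0:ℝ) 1 :=
    ⟨by positivity, by rw [div_le_one hP]; exact h⟩
  simp_rw [term]
  have A := (hasSum_sin3 hx).mul_left (P ^ 2 / (2 * Real.pi ^ 3))
  have B := (hasSum_cos2 hx).mul_left (P * τ / Real.pi ^ 2)
  rcases le_total t τ with hle | hle
  · have hy : (τ - t) / P ∈ Set.Icc (0:ℝ) 1 :=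
      ⟨div_nonneg (by linarith) hP.le, by rw [div_le_one hP]; linarith⟩
    have A' := (hasSum_sin3 hy).mul_left (P ^ 2 / (2 * Real.pi ^ 3))
    have B' := (hasSum_cos2 hy).mul_left (P * τ / Real.pi ^ 2)
    convert! ((A.add A').sub B).sub B' using 1
    rw [max_eq_left (by nlinarith)]
    field_simp
    ring
  · have hy : (t - τ) / P ∈ Set.Icc (0:ℝ) 1 :=
      ⟨div_nonneg (by linarith) hP.le, by rw [div_le_one hP]; linarith⟩
    have A' := (hasSum_sin3 hy).mul_left (-(P ^ 2 / (2 * Real.pi ^ 3)))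
    have B' := (hasSum_cos2 hy).mul_left (P * τ / Real.pi ^ 2)
    have s : ∀ k : ℕ, 2 * Real.pi * k * ((τ - t) / P) = -(2 * Real.pi * k * ((t - τ) / P)) := by
      intro k; ring
    simp_rw [s, Real.sin_neg, Real.cos_neg]
    convert! ((A.add A').sub B).sub B' using 1
    · ext k; ring
    rw [max_eq_right (by nlinarith)]
    field_simp
    ring

lemma fFreq_nonneg {P : ℝ} (hP : 0 < P) (k : ℕ) : 0 ≤ fFreq P k := by
  unfold fFreq; have := Real.pi_pos; positivity

lemma abs_fCoef_le {P τ : ℝ} (hP : 0 < P) (hτ : 0 ≤ τ) (k : ℕ) :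
    |fCoef P τ k| ≤ 16 * τ / P / fFreq P k ^ 2 := by
  unfold fCoef
  have hu := fFreq_nonneg hP k
  set u := fFreq P k
  rcases hu.eq_or_lt with h0 | h0
  · rw [← h0]; simp
  rw [abs_mul, abs_of_nonneg (by positivity : 0 ≤ 8 / P), abs_div,
    abs_of_nonneg (by positivity : 0 ≤ u ^ 3)]
  have hz : 0 ≤ u * τ := by positivity
  have h1 : |Real.sin (u * τ) - u * τ * Real.cos (u * τ)| ≤ 2 * (u * τ) := by
    have a : |Real.sin (u * τ)| ≤ u * τ := by
      have := Real.abs_sin_le_abs (x := u * τ)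
      rwa [abs_of_nonneg hz] at this
    have b : |u * τ * Real.cos (u * τ)| ≤ u * τ := by
      rw [abs_mul, abs_of_nonneg hz]
      exact mul_le_of_le_one_right hz (Real.abs_cos_le_one _)
    have := abs_sub (Real.sin (u * τ)) (u * τ * Real.cos (u * τ))
    linarith
  calc 8 / P * (|Real.sin (u * τ) - u * τ * Real.cos (u * τ)| / u ^ 3)
      ≤ 8 / P * (2 * (u * τ) / u ^ 3) := by gcongr
    _ = 16 * τ / P / u ^ 2 := by field_simp; ring

lemma fourier_tail {P τ t : ℝ} (hP : 0 < P) (hτ : 0 ≤ τ) (ht : 0 ≤ t) (h : τ + t ≤ P)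
    (K : ℕ) (hK : 1 ≤ K) :
    |4 * τ ^ 3 / (3 * P) + ∑ k ∈ Finset.range (K + 1), fCoef P τ k * Real.cos (fFreq P k * t)
      - max (τ ^ 2 - t ^ 2) 0| ≤ 4 * τ * P / (Real.pi ^ 2 * K) := by
  have hs := (hasSum_fourier hP hτ ht h).tendsto_sum_nat
  set f : ℕ → ℝ := fun k : ℕ => fCoef P τ k * Real.cos (fFreq P k * t) with hf
  have hpi := Real.pi_pos
  have hfb : ∀ k, |f k| ≤ 4 * τ * P / Real.pi ^ 2 * ((k : ℝ) ^ 2)⁻¹ := by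
    intro k
    rw [hf, abs_mul]
    calc |fCoef P τ k| * |Real.cos (fFreq P k * t)| ≤ |fCoef P τ k| * 1 := by
          gcongr; exact Real.abs_cos_le_one _
      _ ≤ 16 * τ / P / fFreq P k ^ 2 := by rw [mul_one]; exact abs_fCoef_le hP hτ k
      _ = 4 * τ * P / Real.pi ^ 2 * ((k : ℝ) ^ 2)⁻¹ := by
        unfold fFreq
        rcases Nat.eq_zero_or_pos k with rfl | hk
        · simp
        have hk' : (k : ℝ) ≠ 0 := by positivity
        field_simp; ring
  have hKpos : (0:ℝ) < K := by exact_mod_cast hK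
  have key : ∀ᶠ N : ℕ in Filter.atTop, |∑ k ∈ Finset.range (K + 1), f k -
      ∑ k ∈ Finset.range N, f k| ≤ 4 * τ * P / (Real.pi ^ 2 * K) := by
    filter_upwards [Filter.eventually_ge_atTop (K + 1)] with N hN
    obtain ⟨M, rfl⟩ : ∃ M, N = M + 1 := ⟨N - 1, by omega⟩
    have hKM : K ≤ M := by omega
    have e : ∑ k ∈ Finset.range (M + 1), f k - ∑ k ∈ Finset.range (K + 1), f k =
        ∑ k ∈ Finset.Ioc K M, f k := by
      rw [← Finset.sum_Ico_eq_sub _ hN]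
      congr 1
      ext k
      simp only [Finset.mem_Ico, Finset.mem_Ioc]
      omega
    rw [abs_sub_comm, e]
    calc |∑ k ∈ Finset.Ioc K M, f k| ≤ ∑ k ∈ Finset.Ioc K M, |f k| :=
          Finset.abs_sum_le_sum_abs _ _
      _ ≤ ∑ k ∈ Finset.Ioc K M, 4 * τ * P / Real.pi ^ 2 * ((k : ℝ) ^ 2)⁻¹ :=
          Finset.sum_le_sum fun k _ => hfb k
      _ = 4 * τ * P / Real.pi ^ 2 * ∑ k ∈ Finset.Ioc K M, ((k : ℝ) ^ 2)⁻¹ := by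
          rw [Finset.mul_sum]
      _ ≤ 4 * τ * P / Real.pi ^ 2 * ((K : ℝ)⁻¹ - (M : ℝ)⁻¹) := by
          gcongr; exact sum_Ioc_inv_sq_le_sub (by omega) hKM
      _ ≤ 4 * τ * P / Real.pi ^ 2 * (K : ℝ)⁻¹ := by
          gcongr; simp
      _ = 4 * τ * P / (Real.pi ^ 2 * K) := by field_simp
  have lim := ((tendsto_const_nhds (x := ∑ k ∈ Finset.range (K + 1), f k)).sub hs).abs
  have := le_of_tendsto lim key
  have e : 4 * τ ^ 3 / (3 * P) + ∑ k ∈ Finset.range (K + 1), f k - max (τ ^ 2 - t ^ 2) 0 =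
      ∑ k ∈ Finset.range (K + 1), f k - (max (τ ^ 2 - t ^ 2) 0 - 4 * τ ^ 3 / (3 * P)) := by ring
  rw [e]
  exact this

open MeasureTheory in
lemma poisson_hasSum (r : NNReal) (a : ℕ → ℝ) (T : ℝ)
    (ha : Summable (fun j => ‖a j * (r : ℝ) ^ j‖)) (hT : HasSum (fun j => a j * (r : ℝ) ^ j) T) :
    HasSum (fun x : ℕ => Real.exp (-(r : ℝ)) * (r : ℝ) ^ x / (x.factorial : ℝ) *
      ∑ j ∈ Finset.range (x + 1), (x.descFactorial j : ℝ) * a j) T := by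
  have hg : Summable (fun k : ℕ => ‖(r : ℝ) ^ k / (k.factorial : ℝ)‖) :=
    (Real.summable_pow_div_factorial (r : ℝ)).norm
  have h1 := tsum_mul_tsum_eq_tsum_sum_range_of_summable_norm ha hg
  have h2 := (summable_norm_sum_mul_range_of_summable_norm ha hg).of_norm
  have h3 := h2.hasSum
  rw [← h1, hT.tsum_eq] at h3
  have he : ∑' k : ℕ, (r : ℝ) ^ k / (k.factorial : ℝ) = Real.exp r := by
    rw [Real.exp_eq_exp_ℝ, NormedSpace.exp_eq_tsum_div]
  rw [he] at h3
  have h4 := h3.mul_left (Real.exp (-(r : ℝ)))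
  have e1 : Real.exp (-(r : ℝ)) * (T * Real.exp (r : ℝ)) = T := by
    rw [mul_comm T, ← mul_assoc, ← Real.exp_add]; simp
  rw [e1] at h4
  convert! h4 using 1
  ext x
  rw [mul_div_assoc, mul_assoc]
  congr 1
  rw [Finset.mul_sum]
  refine Finset.sum_congr rfl fun j hj => ?_
  have hjx : j ≤ x := by simpa [Nat.lt_succ_iff] using hj
  have hfac : ((x - j).factorial : ℝ) * (x.descFactorial j : ℝ) = x.factorial := by
    exact_mod_cast Nat.factorial_mul_descFactorial hjx
  rw [← hfac]
  have hd : (x.descFactorial j : ℝ) ≠ 0 := by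
    have := Nat.descFactorial_pos.2 hjx
    positivity
  have hd2 : ((x - j).factorial : ℝ) ≠ 0 := by positivity
  have hp : (r : ℝ) ^ x = (r : ℝ) ^ j * (r : ℝ) ^ (x - j) := by
    rw [← pow_add]; congr 1; omega
  rw [hp]
  field_simp

lemma poisson_quad (r : NNReal) (α β γ : ℝ) :
    HasSum (fun x : ℕ => Real.exp (-(r : ℝ)) * (r : ℝ) ^ x / (x.factorial : ℝ) *
      (α + β * x + γ * (x * (x - 1)))) (α + β * r + γ * (r : ℝ) ^ 2) := by
  let a : ℕ → ℝ := fun j => if j = 0 then α else if j = 1 then β else if j = 2 then γ else 0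
  have hz : ∀ j ∉ Finset.range 3, a j * (r : ℝ) ^ j = 0 := by
    intro j hj
    have : 3 ≤ j := by simpa using hj
    simp [a, show j ≠ 0 by omega, show j ≠ 1 by omega, show j ≠ 2 by omega]
  have h1 : HasSum (fun j => a j * (r : ℝ) ^ j) (α + β * r + γ * (r : ℝ) ^ 2) := by
    have : HasSum (fun j => a j * (r : ℝ) ^ j) (∑ j ∈ Finset.range 3, a j * (r : ℝ) ^ j) :=
      hasSum_sum_of_ne_finset_zero hz
    convert! this using 1
    simp [Finset.sum_range_succ, a]
  have h2 : Summable (fun j => ‖a j * (r : ℝ) ^ j‖) := by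
    refine summable_of_ne_finset_zero (s := Finset.range 3) fun j hj => ?_
    rw [hz j hj, norm_zero]
  convert! poisson_hasSum r a _ h2 h1 using 1
  ext x
  congr 1
  have e : ∑ j ∈ Finset.range (x + 1), (x.descFactorial j : ℝ) * a j =
      ∑ j ∈ Finset.range (x + 3), (x.descFactorial j : ℝ) * a j := by
    rw [Finset.sum_range_succ _ (x + 2), Finset.sum_range_succ _ (x + 1),
      Nat.descFactorial_eq_zero_iff_lt.2 (by omega), Nat.descFactorial_eq_zero_iff_lt.2 (by omega)]
    simp
  rw [e, Finset.sum_range_succ', Finset.sum_range_succ', Finset.sum_range_succ']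
  have d2 : (x : ℝ) * ((x - 1 : ℕ) : ℝ) = (x : ℝ) * (x - 1) := by
    cases x <;> simp
  simp [a]
  linear_combination (-γ) * d2

open MeasureTheory ProbabilityTheory in
lemma integral_cEst (r : NNReal) (u : ℝ) :
    ∫ x, cEst x u ∂(poissonMeasure r) = Real.cos (u * Real.sqrt r) := by
  rw [integral_poissonMeasure]
  have hc := Real.hasSum_cos (u * Real.sqrt r)
  have e : ∀ j : ℕ, (-1 : ℝ) ^ j * (u * Real.sqrt r) ^ (2 * j) / ((2 * j).factorial : ℝ) =
      ((-1 : ℝ) ^ j * u ^ (2 * j) / ((2 * j).factorial : ℝ)) * (r : ℝ) ^ j := by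
    intro j
    rw [mul_pow, pow_mul (Real.sqrt r), Real.sq_sqrt r.coe_nonneg]
    ring
  simp_rw [e] at hc
  have h := poisson_hasSum r _ _ hc.summable.norm hc
  rw [← h.tsum_eq]
  refine tsum_congr fun x => ?_
  rw [smul_eq_mul, cEst]
  congr 1
  refine Finset.sum_congr rfl fun j _ => ?_
  ring

open MeasureTheory ProbabilityTheory in
lemma memLp_natCast (r : NNReal) : MemLp (fun x : ℕ => (x : ℝ)) 2 (poissonMeasure r) := by
  rw [memLp_two_iff_integrable_sq .of_discrete, integrable_poissonMeasure_iff]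
  convert! (poisson_quad r 0 1 1).summable using 1
  ext x
  rw [Real.norm_of_nonneg (by positivity)]
  ring

open MeasureTheory ProbabilityTheory in
lemma integral_natCast (r : NNReal) : ∫ x : ℕ, (x : ℝ) ∂(poissonMeasure r) = r := by
  rw [integral_poissonMeasure]
  have := (poisson_quad r 0 1 0).tsum_eq
  simpa using this

open MeasureTheory ProbabilityTheory in
lemma integral_natCast_sub_sq (r : NNReal) (c : ℝ) :
    ∫ x : ℕ, ((x : ℝ) - c) ^ 2 ∂(poissonMeasure r) = r + (r - c) ^ 2 := by
  rw [integral_poissonMeasure]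
  have := (poisson_quad r (c ^ 2) (1 - 2 * c) 1).tsum_eq
  have e : (r : ℝ) + (r - c) ^ 2 = c ^ 2 + (1 - 2 * c) * r + 1 * (r : ℝ) ^ 2 := by ring
  rw [e, ← this]
  refine tsum_congr fun x => ?_
  rw [smul_eq_mul]
  congr 1
  ring

open MeasureTheory ProbabilityTheory in
lemma variance_natCast (r : NNReal) : Var[fun x : ℕ => (x : ℝ); poissonMeasure r] = r := by
  rw [variance_eq_integral .of_discrete, integral_natCast, integral_natCast_sub_sq]
  ring

lemma sqrt_step (x : ℕ) : 1 / Real.sqrt ((x : ℝ) + 1 / 2) ≤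
    2 * (Real.sqrt ((x : ℝ) + 1) - Real.sqrt x) := by
  have h0 : 0 < Real.sqrt ((x : ℝ) + 1 / 2) := Real.sqrt_pos.2 (by positivity)
  have h1 : Real.sqrt ((x : ℝ) + 1) ^ 2 = x + 1 := Real.sq_sqrt (by positivity)
  have h2 : Real.sqrt ((x : ℝ)) ^ 2 = x := Real.sq_sqrt (by positivity)
  have h3 : Real.sqrt ((x : ℝ) + 1 / 2) ^ 2 = x + 1 / 2 := Real.sq_sqrt (by positivity)
  have n1 := Real.sqrt_nonneg ((x : ℝ) + 1)
  have n2 := Real.sqrt_nonneg (x : ℝ)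
  have h12 : Real.sqrt x ≤ Real.sqrt ((x : ℝ) + 1) := Real.sqrt_le_sqrt (by linarith)
  set s := Real.sqrt ((x : ℝ) + 1 / 2)
  set a := Real.sqrt ((x : ℝ) + 1)
  set b := Real.sqrt (x : ℝ)
  have hab : a + b ≤ 2 * s := by
    apply abs_le_of_sq_le_sq' _ (by positivity) |>.2
    nlinarith [sq_nonneg (a - b)]
  rw [div_le_iff₀ h0]
  nlinarith [mul_le_mul_of_nonneg_left hab (sub_nonneg.2 h12)]

lemma lipschitz_sqrt {f : ℕ → ℝ} {A : ℝ} (hA : 0 ≤ A)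
    (hf : ∀ x : ℕ, |f (x + 1) - f x| ≤ A / Real.sqrt ((x : ℝ) + 1 / 2)) (x d : ℕ) :
    |f (x + d) - f x| ≤ 2 * A * (Real.sqrt ((x + d : ℕ) : ℝ) - Real.sqrt x) := by
  induction d with
  | zero => simp
  | succ d ih =>
    have h1 := hf (x + d)
    have h2 := mul_le_mul_of_nonneg_left (sqrt_step (x + d)) hA
    have h3 := abs_sub_le (f (x + (d + 1))) (f (x + d)) (f x)
    rw [← add_assoc] at h3 ⊢
    rw [mul_one_div] at h2
    have e : ((x + d + 1 : ℕ) : ℝ) = ((x + d : ℕ) : ℝ) + 1 := by push_cast; ring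
    rw [e]
    nlinarith

lemma lipschitz_sq {f : ℕ → ℝ} {A : ℝ} (hA : 0 ≤ A)
    (hf : ∀ x : ℕ, |f (x + 1) - f x| ≤ A / Real.sqrt ((x : ℝ) + 1 / 2)) (x m : ℕ) (hm : 0 < m) :
    (f x - f m) ^ 2 ≤ 4 * A ^ 2 / m * ((x : ℝ) - m) ^ 2 := by
  have key : |f x - f m| ≤ 2 * A * |Real.sqrt x - Real.sqrt m| := by
    rcases le_total x m with h | h
    · obtain ⟨d, rfl⟩ := Nat.exists_eq_add_of_le h
      have := lipschitz_sqrt hA hf x d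
      rw [abs_sub_comm, abs_sub_comm (Real.sqrt x)]
      exact this.trans (mul_le_mul_of_nonneg_left (le_abs_self _) (by positivity))
    · obtain ⟨d, rfl⟩ := Nat.exists_eq_add_of_le h
      have := lipschitz_sqrt hA hf m d
      exact this.trans (mul_le_mul_of_nonneg_left (le_abs_self _) (by positivity))
  have h1 : (f x - f m) ^ 2 ≤ (2 * A * |Real.sqrt x - Real.sqrt m|) ^ 2 := by
    rw [← sq_abs]
    exact pow_le_pow_left₀ (abs_nonneg _) key 2
  have hmp : (0:ℝ) < m := by exact_mod_cast hm
  have h2 : (Real.sqrt x - Real.sqrt m) ^ 2 ≤ ((x : ℝ) - m) ^ 2 / m := by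
    rw [le_div_iff₀ hmp]
    have a := Real.sq_sqrt (Nat.cast_nonneg (α := ℝ) x)
    have b := Real.sq_sqrt hmp.le
    have na := Real.sqrt_nonneg (x : ℝ)
    have nb := Real.sqrt_nonneg (m : ℝ)
    have e : ((x : ℝ) - m) ^ 2 =
        (Real.sqrt x - Real.sqrt m) ^ 2 * (Real.sqrt x + Real.sqrt m) ^ 2 := by
      rw [← mul_pow]
      congr 1
      nlinarith
    rw [e]
    apply mul_le_mul_of_nonneg_left _ (sq_nonneg _)
    nlinarith [mul_nonneg na nb, sq_nonneg (Real.sqrt (x:ℝ))]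
  rw [mul_pow, sq_abs] at h1
  calc (f x - f m) ^ 2 ≤ (2 * A) ^ 2 * (Real.sqrt x - Real.sqrt m) ^ 2 := h1
    _ ≤ (2 * A) ^ 2 * (((x : ℝ) - m) ^ 2 / m) := by gcongr
    _ = _ := by ring

open MeasureTheory ProbabilityTheory in
lemma variance_lip {f : ℕ → ℝ} {A : ℝ} (hA : 0 ≤ A)
    (hf : ∀ x : ℕ, |f (x + 1) - f x| ≤ A / Real.sqrt ((x : ℝ) + 1 / 2)) (r : NNReal) :
    Var[f; poissonMeasure r] ≤ 8 * A ^ 2 := by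
  set m : ℕ := ⌊(r : ℝ)⌋₊ + 1 with hm
  have hm0 : 0 < m := by omega
  have m1 : (r : ℝ) ≤ m := by
    rw [hm]; push_cast; exact (Nat.lt_floor_add_one _).le
  have m2 : (m : ℝ) ≤ r + 1 := by
    rw [hm]; push_cast; linarith [Nat.floor_le r.coe_nonneg]
  have hmp : (1:ℝ) ≤ m := by exact_mod_cast hm0
  have h1 : Var[f; poissonMeasure r] = Var[fun x => f x - f m; poissonMeasure r] := by
    rw [variance_sub_const .of_discrete]
  rw [h1]
  refine (variance_le_expectation_sq .of_discrete).trans ?_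
  have hintg : Integrable (fun x : ℕ => ((x : ℝ) - m) ^ 2) (poissonMeasure r) :=
    ((memLp_natCast r).sub (memLp_const (m : ℝ))).integrable_sq
  calc ∫ x, ((fun x => f x - f m) ^ 2) x ∂(poissonMeasure r)
      ≤ ∫ x : ℕ, 4 * A ^ 2 / m * ((x : ℝ) - m) ^ 2 ∂(poissonMeasure r) := by
        refine integral_mono_of_nonneg (.of_forall fun x => ?_) (hintg.const_mul _)
          (.of_forall fun x => ?_)
        · simp only [Pi.zero_apply, Pi.pow_apply]; positivity
        · exact lipschitz_sq hA hf x m hm0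
    _ = 4 * A ^ 2 / m * (r + (r - m) ^ 2) := by
        rw [integral_const_mul, integral_natCast_sub_sq]
    _ ≤ 4 * A ^ 2 / m * (2 * m) := by
        gcongr
        nlinarith
    _ = 8 * A ^ 2 := by field_simp; ring

/-- Estimator of `(τ² - λ)₊` from a Poisson(λ) count. -/
noncomputable def gEst (P τ : ℝ) (K : ℕ) (x : ℕ) : ℝ :=
  4 * τ ^ 3 / (3 * P) + ∑ k ∈ Finset.range (K + 1), fCoef P τ k * cEst x (fFreq P k)

open MeasureTheory ProbabilityTheory in
lemma memLp_cEst (r : NNReal) {u : ℝ} (hu : 0 ≤ u) (p : ENNReal) :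
    MemLp (fun x => cEst x u) p (poissonMeasure r) :=
  MemLp.of_bound .of_discrete (Real.exp (u ^ 2 / 4)) (.of_forall fun x => abs_cEst_le x hu)

open MeasureTheory ProbabilityTheory in
lemma memLp_gEst (r : NNReal) {P τ : ℝ} (hP : 0 < P) (K : ℕ) (p : ENNReal) :
    MemLp (gEst P τ K) p (poissonMeasure r) := by
  have h : MemLp (fun x => ∑ k ∈ Finset.range (K + 1), fCoef P τ k * cEst x (fFreq P k)) p
      (poissonMeasure r) :=
    memLp_finsetSum _ fun k _ => (memLp_cEst r (fFreq_nonneg hP k) p).const_mul (fCoef P τ k)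
  have h2 : MemLp (fun _ : ℕ => 4 * τ ^ 3 / (3 * P)) p (poissonMeasure r) := memLp_const _
  exact h2.add h

open MeasureTheory ProbabilityTheory in
lemma gEst_bias (r : NNReal) {P τ : ℝ} (hP : 0 < P) (hτ : 0 ≤ τ) (h : τ + Real.sqrt r ≤ P)
    (K : ℕ) (hK : 1 ≤ K) :
    |∫ x, gEst P τ K x ∂(poissonMeasure r) - max (τ ^ 2 - r) 0| ≤
      4 * τ * P / (Real.pi ^ 2 * K) := by
  have e : ∫ x, gEst P τ K x ∂(poissonMeasure r) = 4 * τ ^ 3 / (3 * P) +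
      ∑ k ∈ Finset.range (K + 1), fCoef P τ k * Real.cos (fFreq P k * Real.sqrt r) := by
    have hi : ∀ k ∈ Finset.range (K + 1),
        Integrable (fun x => fCoef P τ k * cEst x (fFreq P k)) (poissonMeasure r) := fun k _ =>
      (memLp_one_iff_integrable.1 (memLp_cEst r (fFreq_nonneg hP k) 1)).const_mul _
    unfold gEst
    rw [integral_add (integrable_const _) (integrable_finsetSum _ hi), integral_finsetSum _ hi]
    simp only [integral_const_mul, integral_cEst]
    simp
  rw [e]
  have := fourier_tail hP hτ (Real.sqrt_nonneg (r : ℝ)) h K hK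
  rwa [Real.sq_sqrt r.coe_nonneg] at this

lemma gEst_step {P τ : ℝ} (hP : 0 < P) (hτ : 0 ≤ τ) (K : ℕ) (x : ℕ) :
    |gEst P τ K (x + 1) - gEst P τ K x| ≤
      (4 * τ / Real.pi * (1 + Real.log K) * Real.exp (fFreq P K ^ 2 / 4)) /
        Real.sqrt ((x : ℝ) + 1 / 2) := by
  have hpi := Real.pi_pos
  have e : gEst P τ K (x + 1) - gEst P τ K x = ∑ k ∈ Finset.range (K + 1),
      fCoef P τ k * (cEst (x + 1) (fFreq P k) - cEst x (fFreq P k)) := by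
    simp only [gEst, mul_sub, Finset.sum_sub_distrib]
    ring
  have hs : 0 < Real.sqrt ((x : ℝ) + 1 / 2) := Real.sqrt_pos.2 (by positivity)
  set s := Real.sqrt ((x : ℝ) + 1 / 2) with hsdef
  have hterm : ∀ k ∈ Finset.range (K + 1),
      |fCoef P τ k * (cEst (x + 1) (fFreq P k) - cEst x (fFreq P k))| ≤
      (4 * τ / Real.pi * Real.exp (fFreq P K ^ 2 / 4) / s) * (k : ℝ)⁻¹ := by
    intro k hk
    have hkK : k ≤ K := by simpa [Nat.lt_succ_iff] using hk
    have hu := fFreq_nonneg hP k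
    have hmono : fFreq P k ≤ fFreq P K := by
      unfold fFreq; gcongr
    rw [abs_mul]
    calc |fCoef P τ k| * |cEst (x + 1) (fFreq P k) - cEst x (fFreq P k)|
        ≤ (16 * τ / P / fFreq P k ^ 2) * ((fFreq P k / 2 * Real.exp (fFreq P K ^ 2 / 4)) / s) := by
          refine mul_le_mul (abs_fCoef_le hP hτ k) ?_ (abs_nonneg _) (by positivity)
          refine (abs_cEst_succ_sub_le x hu).trans ?_
          rw [← hsdef]
          gcongr
      _ = _ := by
          rcases Nat.eq_zero_or_pos k with rfl | hk
          · simp [fFreq]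
          have hk' : (k : ℝ) ≠ 0 := by positivity
          generalize Real.exp (fFreq P K ^ 2 / 4) = E
          unfold fFreq
          field_simp
          ring
  have hharm : ∑ k ∈ Finset.range (K + 1), (k : ℝ)⁻¹ ≤ 1 + Real.log K := by
    have := harmonic_le_one_add_log K
    rw [harmonic] at this
    rw [Finset.sum_range_succ']
    push_cast at this ⊢
    simpa using this
  rw [e]
  refine (Finset.abs_sum_le_sum_abs _ _).trans ((Finset.sum_le_sum hterm).trans ?_)
  rw [← Finset.mul_sum]
  calc _ ≤ (4 * τ / Real.pi * Real.exp (fFreq P K ^ 2 / 4) / s) * (1 + Real.log K) := by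
        gcongr
    _ = _ := by ring

open MeasureTheory ProbabilityTheory in
lemma gEst_var (r : NNReal) {P τ : ℝ} (hP : 0 < P) (hτ : 0 ≤ τ) (K : ℕ) :
    Var[gEst P τ K; poissonMeasure r] ≤
      16 * τ ^ 2 * (1 + Real.log K) ^ 2 * Real.exp (fFreq P K ^ 2 / 2) := by
  have hpi := Real.pi_gt_three
  have hlog : 0 ≤ Real.log K := Real.log_natCast_nonneg K
  refine (variance_lip (by positivity) (gEst_step hP hτ K) r).trans ?_
  have e : Real.exp (fFreq P K ^ 2 / 2) = Real.exp (fFreq P K ^ 2 / 4) ^ 2 := by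
    rw [← Real.exp_nat_mul]; congr 1; push_cast; ring
  rw [e]
  have h : 16 / Real.pi ^ 2 ≤ 2 := by
    rw [div_le_iff₀ (by positivity)]; nlinarith
  calc 8 * (4 * τ / Real.pi * (1 + Real.log K) * Real.exp (fFreq P K ^ 2 / 4)) ^ 2
      = (16 / Real.pi ^ 2) * (8 * τ ^ 2 * (1 + Real.log K) ^ 2 *
          Real.exp (fFreq P K ^ 2 / 4) ^ 2) := by
        field_simp; ring
    _ ≤ 2 * (8 * τ ^ 2 * (1 + Real.log K) ^ 2 * Real.exp (fFreq P K ^ 2 / 4) ^ 2) := by gcongr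
    _ = _ := by ring

open MeasureTheory ProbabilityTheory in
lemma risk_eq {S : ℕ} (n : ℕ) (p : Fin S → ℝ) (r : Fin S → NNReal)
    (hr : ∀ i, (r i : ℝ) = n * p i) (L : ℝ) (f : Fin S → ℕ → ℝ)
    (hf : ∀ i, MemLp (f i) 2 (poissonMeasure (r i))) :
    risk n p L (fun x => ∑ i, f i (x i)) =
      ENNReal.ofReal ((∑ i, ∫ x, f i x ∂(poissonMeasure (r i)) - L) ^ 2 +
        ∑ i, Var[f i; poissonMeasure (r i)]) := by
  set μ := Measure.pi (fun i => poissonMeasure (r i)) with hμ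
  have hmem : ∀ i, MemLp (fun x : Fin S → ℕ => f i (x i)) 2 μ := fun i =>
    (hf i).comp_measurePreserving (measurePreserving_eval _ i)
  have hZ : MemLp (fun x : Fin S → ℕ => ∑ i, f i (x i)) 2 μ := memLp_finsetSum _ fun i _ => hmem i
  have hZL : MemLp (fun x : Fin S → ℕ => ∑ i, f i (x i) - L) 2 μ := hZ.sub (memLp_const L)
  have h1 : risk n p L (fun x => ∑ i, f i (x i)) =
      ∫⁻ x, ENNReal.ofReal ((∑ i, f i (x i) - L) ^ 2) ∂μ := by
    rw [lintegral_countable']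
    unfold risk
    refine tsum_congr fun x => ?_
    rw [hμ, Measure.pi_singleton]
    simp only [poissonMeasure_singleton]
    rw [← ENNReal.ofReal_prod_of_nonneg (fun i _ => by positivity),
      ← ENNReal.ofReal_mul (sq_nonneg _), mul_comm]
    congr 2
    unfold prodPMF _root_.poissonPMF
    simp only [hr]
  have h2 : ∫ x, (∑ i, f i (x i)) ∂μ = ∑ i, ∫ x, f i x ∂(poissonMeasure (r i)) := by
    rw [integral_finsetSum _ fun i _ => (hmem i).integrable one_le_two]
    refine Finset.sum_congr rfl fun i _ => ?_
    exact integral_comp_eval (μ := fun i => poissonMeasure (r i)) .of_discrete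
  have h3 : Var[fun x : Fin S → ℕ => ∑ i, f i (x i); μ] =
      ∑ i, Var[f i; poissonMeasure (r i)] := by
    rw [← variance_sum_pi hf]
    congr 1
    ext x
    simp
  have h4 := variance_eq_sub hZL
  rw [variance_sub_const hZ.1, h3, integral_sub (hZ.integrable one_le_two) (integrable_const L),
    h2] at h4
  simp only [integral_const, probReal_univ, one_smul] at h4
  rw [h1, ← ofReal_integral_eq_lintegral_ofReal hZL.integrable_sq
    (.of_forall fun x => sq_nonneg _)]
  congr 1
  have h5 : ∫ x, ((fun x : Fin S → ℕ => ∑ i, f i (x i) - L) ^ 2) x ∂μ =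
    ∫ x, (∑ i, f i (x i) - L) ^ 2 ∂μ := rfl
  rw [← h5]
  linarith

open MeasureTheory ProbabilityTheory in
lemma coord_of_g (n : ℕ) (hn : 2 ≤ n) (q : ℝ) (g : ℕ → ℝ) (r : NNReal) (p : ℝ)
    (hr : (r : ℝ) = n * p) (hg : MemLp g 2 (poissonMeasure r)) :
    MemLp (fun x : ℕ => ((x : ℝ) / n - q) + 2 / n * g x) 2 (poissonMeasure r) ∧
    |∫ x, (((x : ℝ) / n - q) + 2 / n * g x) ∂(poissonMeasure r) - abs (p - q)| ≤
      2 / n * |∫ x, g x ∂(poissonMeasure r) - max (n * q - r) 0| ∧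
    Var[fun x : ℕ => ((x : ℝ) / n - q) + 2 / n * g x; poissonMeasure r] ≤
      2 * p / n + 8 / (n : ℝ) ^ 2 * Var[g; poissonMeasure r] := by
  have hn0 : (0:ℝ) < n := by positivity
  have hX := memLp_natCast r
  have hXn : MemLp (fun x : ℕ => (x : ℝ) / n) 2 (poissonMeasure r) := by
    simpa [div_eq_mul_inv] using hX.mul_const ((n : ℝ)⁻¹)
  have h1 : MemLp (fun x : ℕ => (x : ℝ) / n - q) 2 (poissonMeasure r) :=
    hXn.sub (memLp_const q)
  have h2 : MemLp (fun x : ℕ => 2 / (n : ℝ) * g x) 2 (poissonMeasure r) := hg.const_mul _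
  refine ⟨h1.add h2, ?_, ?_⟩
  · rw [integral_add (h1.integrable one_le_two) (h2.integrable one_le_two),
      integral_sub (hXn.integrable one_le_two) (integrable_const q), integral_const_mul,
      integral_div, integral_natCast, hr]
    simp only [integral_const, probReal_univ, one_smul]
    have e : (n : ℝ) * p / n - q + 2 / n * ∫ x, g x ∂(poissonMeasure r) - |p - q| =
        2 / n * (∫ x, g x ∂(poissonMeasure r) - max (n * q - n * p) 0) := by
      rcases le_total p q with h | h
      · rw [abs_of_nonpos (by linarith), max_eq_left (by nlinarith)]
        field_simp; ring
      · rw [abs_of_nonneg (by linarith), max_eq_right (by nlinarith)]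
        field_simp; ring
    rw [e, abs_mul, abs_of_nonneg (by positivity : 0 ≤ 2 / (n : ℝ))]
  · have hsub := variance_fun_sub h1 h2
    have hadd := variance_fun_add h1 h2
    have hnn := variance_nonneg (fun x : ℕ => ((x : ℝ) / n - q) - 2 / n * g x) (poissonMeasure r)
    have v1 : Var[fun x : ℕ => (x : ℝ) / n - q; poissonMeasure r] = p / n := by
      rw [variance_sub_const .of_discrete]
      have : (fun x : ℕ => (x : ℝ) / n) = fun x : ℕ => (x : ℝ) * (n : ℝ)⁻¹ := by
        ext x; rw [div_eq_mul_inv]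
      rw [this, variance_mul_const, variance_natCast, hr]
      field_simp
    have v2 : Var[fun x : ℕ => 2 / (n : ℝ) * g x; poissonMeasure r] =
        4 / (n : ℝ) ^ 2 * Var[g; poissonMeasure r] := by
      rw [variance_const_mul]; ring
    have e : 2 * p / n + 8 / (n : ℝ) ^ 2 * Var[g; poissonMeasure r] =
        2 * (p / n) + 2 * (4 / (n : ℝ) ^ 2 * Var[g; poissonMeasure r]) := by ring
    rw [e, ← v1, ← v2]
    linarith

open MeasureTheory ProbabilityTheory in
set_option maxHeartbeats 4000000 in
lemma coord (ε : ℝ) (hε0 : 0 < ε) (hε1 : ε < 1) (n : ℕ) (hn : 2 ≤ n) (q : ℝ) (hq0 : 0 ≤ q)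
    (hq1 : q ≤ 1) :
    ∃ f : ℕ → ℝ, ∀ (p : ℝ) (r : NNReal), 0 ≤ p → p ≤ 1 → (r : ℝ) = n * p →
      MemLp f 2 (poissonMeasure r) ∧
      |∫ x, f x ∂(poissonMeasure r) - abs (p - q)| ≤
        (2 + 6 * Real.sqrt (2 / ε)) * min q (Real.sqrt (q / (n * Real.log n))) ∧
      Var[f; poissonMeasure r] ≤
        (3 + 2304 * Real.exp 5 / ε) * (p + q) * (Real.log n / (n : ℝ) ^ (1 - ε)) := by
  have hn0 : (0:ℝ) < n := by positivity
  have hn2 : (2:ℝ) ≤ n := by exact_mod_cast hn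
  have hl : 0.69 ≤ Real.log n := by
    have := Real.log_le_log (by norm_num) hn2
    have := Real.log_two_gt_d9
    linarith
  set l := Real.log n with hldef
  have hl0 : 0 < l := by linarith
  have hln : l ≤ n := by
    have := Real.log_le_sub_one_of_pos hn0
    linarith
  have hpow : (n : ℝ) ^ ε / n = 1 / (n : ℝ) ^ (1 - ε) := by
    rw [Real.rpow_sub hn0, Real.rpow_one]; field_simp
  have hpow1 : 1 ≤ (n : ℝ) ^ ε := Real.one_le_rpow (by linarith) hε0.le
  have hpn : ∀ p : ℝ, 0 ≤ p → 2 * p / n ≤ 3 * p * (l / (n : ℝ) ^ (1 - ε)) := by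
    intro p hp
    have e : 3 * p * (l / (n : ℝ) ^ (1 - ε)) = (p / n) * (3 * l * (n : ℝ) ^ ε) := by
      rw [div_eq_mul_one_div l, ← hpow]; ring
    rw [e]
    have : 2 ≤ 3 * l * (n : ℝ) ^ ε := by nlinarith
    have h0 : 0 ≤ p / n := by positivity
    calc 2 * p / n = p / n * 2 := by ring
      _ ≤ _ := by gcongr
  have hR : 0 ≤ l / (n : ℝ) ^ (1 - ε) := by positivity
  have hsq := Real.sqrt_nonneg (2 / ε)
  by_cases hq : q < 1 / (n * l)
  · refine ⟨fun x => ((x : ℝ) / n - q) + 2 / n * (fun _ => (0:ℝ)) x, fun p r hp0 hp1 hr => ?_⟩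
    obtain ⟨a, b, c⟩ := coord_of_g n hn q (fun _ => 0) r p hr (memLp_const 0)
    refine ⟨a, b.trans ?_, c.trans ?_⟩
    · have hmin : min q (Real.sqrt (q / (n * l))) = q := by
        apply min_eq_left
        apply Real.le_sqrt_of_sq_le
        rw [div_eq_mul_one_div, sq]
        exact mul_le_mul_of_nonneg_left hq.le hq0
      rw [hmin, integral_zero, zero_sub, abs_neg, abs_of_nonneg (le_max_right _ _)]
      have h1 : max (n * q - (r : ℝ)) 0 ≤ n * q :=
        max_le (by linarith [r.coe_nonneg]) (by positivity)
      calc 2 / (n : ℝ) * max (n * q - (r : ℝ)) 0 ≤ 2 / n * (n * q) := by gcongr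
        _ = 2 * q := by field_simp
        _ ≤ _ := by nlinarith
    · have hv : Var[fun _ : ℕ => (0:ℝ); poissonMeasure r] = 0 := variance_zero _
      rw [hv, mul_zero, add_zero]
      refine (hpn p hp0).trans ?_
      have hE : 0 ≤ 2304 * Real.exp 5 / ε := by positivity
      gcongr
      · linarith
      · linarith
  · push Not at hq
    set w := Real.sqrt (ε * l / 2) with hw
    have hw0 : 0 < w := Real.sqrt_pos.2 (by positivity)
    have hw2 : w ^ 2 = ε * l / 2 := Real.sq_sqrt (by positivity)
    set m := Real.sqrt n with hm
    have hm0 : 0 < m := Real.sqrt_pos.2 hn0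
    have hm2 : m ^ 2 = n := Real.sq_sqrt hn0.le
    have hpi := Real.pi_gt_three
    have hpi4 := Real.pi_lt_d2
    set K : ℕ := ⌊w * m / Real.pi⌋₊ + 1 with hK
    have hK1 : 1 ≤ K := by omega
    have hKlow : w * m / Real.pi ≤ K := by
      rw [hK]; push_cast; exact (Nat.lt_floor_add_one _).le
    have hKup : (K : ℝ) ≤ w * m / Real.pi + 1 := by
      rw [hK]; push_cast
      have := Nat.floor_le (by positivity : 0 ≤ w * m / Real.pi)
      linarith
    have hKpos : (0:ℝ) < K := by positivity
    set τ := Real.sqrt (n * q) with hτ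
    have hτ0 : 0 ≤ τ := Real.sqrt_nonneg _
    have hτ2 : τ ^ 2 = n * q := Real.sq_sqrt (by positivity)
    have hP : 0 < 2 * m := by positivity
    refine ⟨fun x => ((x : ℝ) / n - q) + 2 / n * gEst (2 * m) τ K x, fun p r hp0 hp1 hr => ?_⟩
    obtain ⟨a, b, c⟩ := coord_of_g n hn q (gEst (2 * m) τ K) r p hr (memLp_gEst r hP K 2)
    refine ⟨a, b.trans ?_, c.trans ?_⟩
    · have hmin : min q (Real.sqrt (q / (n * l))) = Real.sqrt (q / (n * l)) := by
        apply min_eq_right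
        apply Real.sqrt_le_iff.2 ⟨hq0, ?_⟩
        rw [div_eq_mul_one_div, sq]
        exact mul_le_mul_of_nonneg_left hq hq0
      rw [hmin]
      have hle : τ + Real.sqrt r ≤ 2 * m := by
        have h1 : τ ≤ m := Real.sqrt_le_sqrt (by nlinarith)
        have h2 : Real.sqrt r ≤ m := Real.sqrt_le_sqrt (by rw [hr]; nlinarith)
        linarith
      have hb := gEst_bias r hP hτ0 hle K hK1
      rw [hτ2] at hb
      have hsplit : τ / (n * w) = Real.sqrt (2 / ε) * Real.sqrt (q / (n * l)) := by
        rw [← Real.sqrt_mul (by positivity), eq_comm, Real.sqrt_eq_iff_mul_self_eq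
          (by positivity) (by positivity)]
        have : τ / (n * w) * (τ / (n * w)) = τ ^ 2 / (n ^ 2 * w ^ 2) := by
          field_simp
        rw [this, hτ2, hw2]
        field_simp
      calc 2 / (n : ℝ) * |∫ x, gEst (2 * m) τ K x ∂(poissonMeasure r) - max (n * q - r) 0|
          ≤ 2 / (n : ℝ) * (4 * τ * (2 * m) / (Real.pi ^ 2 * K)) := by gcongr
        _ ≤ 2 / (n : ℝ) * (4 * τ * (2 * m) / (Real.pi ^ 2 * (w * m / Real.pi))) := by gcongr
        _ = 16 / Real.pi * (τ / (n * w)) := by field_simp; ring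
        _ ≤ 6 * (τ / (n * w)) := by
          gcongr
          rw [div_le_iff₀ (by positivity)]; linarith
        _ = 6 * Real.sqrt (2 / ε) * Real.sqrt (q / (n * l)) := by rw [hsplit]; ring
        _ ≤ _ := by
          gcongr
          linarith
    · have hv := gEst_var r hP hτ0 K
      have hfr : fFreq (2 * m) K ^ 2 / 2 ≤ w ^ 2 + 5 := by
        have h1 : fFreq (2 * m) K ≤ w + Real.pi / m := by
          unfold fFreq
          rw [div_le_iff₀ hP]
          have e : (w + Real.pi / m) * (2 * m) = 2 * Real.pi * (w * m / Real.pi + 1) := by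
            field_simp
          rw [e]
          gcongr
        have h0 := fFreq_nonneg hP K
        have h2 : fFreq (2 * m) K ^ 2 ≤ (w + Real.pi / m) ^ 2 := pow_le_pow_left₀ h0 h1 2
        have h3 : (Real.pi / m) ^ 2 ≤ 5 := by
          rw [div_pow, hm2, div_le_iff₀ hn0]
          nlinarith
        nlinarith [sq_nonneg (w - Real.pi / m)]
      have hexp : Real.exp (fFreq (2 * m) K ^ 2 / 2) ≤ (n : ℝ) ^ (ε / 2) * Real.exp 5 := by
        refine (Real.exp_le_exp.2 hfr).trans (le_of_eq ?_)
        rw [Real.exp_add, hw2, Real.rpow_def_of_pos hn0, ← hldef]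
        congr 2
        ring
      have hKn : (K : ℝ) ≤ n := by
        have hwm : w ≤ m := Real.sqrt_le_sqrt (by nlinarith)
        have : w * m / Real.pi ≤ n / 3 := by
          rw [← hm2]
          rw [div_le_div_iff₀ (by positivity) (by norm_num)]
          nlinarith [mul_le_mul_of_nonneg_right hwm hm0.le, sq_nonneg m]
        linarith
      have hlogK : 1 + Real.log K ≤ 3 * l := by
        have := Real.log_le_log hKpos hKn
        rw [← hldef] at this
        linarith
      have hlogK0 : 0 ≤ 1 + Real.log K := by
        have := Real.log_natCast_nonneg K
        linarith
      have hlp : l ≤ (n : ℝ) ^ (ε / 2) / (ε / 2) := Real.log_le_rpow_div hn0.le (by positivity)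
      have hlogsq : (1 + Real.log K) ^ 2 ≤ 18 / ε * l * (n : ℝ) ^ (ε / 2) := by
        calc (1 + Real.log K) ^ 2 ≤ (3 * l) ^ 2 := pow_le_pow_left₀ hlogK0 hlogK 2
          _ = 9 * l * l := by ring
          _ ≤ 9 * l * ((n : ℝ) ^ (ε / 2) / (ε / 2)) := by gcongr
          _ = _ := by field_simp; ring
      have hnn : (n : ℝ) ^ (ε / 2) * (n : ℝ) ^ (ε / 2) = (n : ℝ) ^ ε := by
        rw [← Real.rpow_add hn0]; congr 1; ring
      have hv2 : Var[gEst (2 * m) τ K; poissonMeasure r] ≤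
          288 * Real.exp 5 / ε * n * q * l * (n : ℝ) ^ ε := by
        refine hv.trans ?_
        rw [hτ2]
        calc 16 * (n * q) * (1 + Real.log K) ^ 2 * Real.exp (fFreq (2 * m) K ^ 2 / 2)
            ≤ 16 * (n * q) * (18 / ε * l * (n : ℝ) ^ (ε / 2)) *
              ((n : ℝ) ^ (ε / 2) * Real.exp 5) := by gcongr
          _ = 288 * Real.exp 5 / ε * n * q * l * ((n : ℝ) ^ (ε / 2) * (n : ℝ) ^ (ε / 2)) := by
              ring
          _ = _ := by rw [hnn]
      have h8 : 8 / (n : ℝ) ^ 2 * Var[gEst (2 * m) τ K; poissonMeasure r] ≤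
          2304 * Real.exp 5 / ε * q * (l / (n : ℝ) ^ (1 - ε)) := by
        calc _ ≤ 8 / (n : ℝ) ^ 2 * (288 * Real.exp 5 / ε * n * q * l * (n : ℝ) ^ ε) := by gcongr
          _ = 2304 * Real.exp 5 / ε * q * (l * ((n : ℝ) ^ ε / n)) := by field_simp; ring
          _ = _ := by rw [hpow]; ring
      have hE : 0 ≤ 2304 * Real.exp 5 / ε := by positivity
      have h9 := hpn p hp0
      have ha : 0 ≤ 2304 * Real.exp 5 / ε * p * (l / (n : ℝ) ^ (1 - ε)) := by positivity
      have hb : 0 ≤ 3 * q * (l / (n : ℝ) ^ (1 - ε)) := by positivity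
      have e : (3 + 2304 * Real.exp 5 / ε) * (p + q) * (l / (n : ℝ) ^ (1 - ε)) =
          3 * p * (l / (n : ℝ) ^ (1 - ε)) + 2304 * Real.exp 5 / ε * q * (l / (n : ℝ) ^ (1 - ε)) +
          2304 * Real.exp 5 / ε * p * (l / (n : ℝ) ^ (1 - ε)) +
          3 * q * (l / (n : ℝ) ^ (1 - ε)) := by ring
      rw [e]
      linarith

/-- achievability — for known `Q` there is an estimator whose worst-case risk
is bounded by `C·[(Σᵢ min{qᵢ, √(qᵢ/(n ln n))})² + (ln n)/n^{1-ε} + S/n^β]`. -/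
theorem optimal_estimator_knownQ (ε β : ℝ) (hε0 : 0 < ε) (hε1 : ε < 1) (hβ : 0 < β) :
    ∃ C : ℝ, 0 < C ∧
      ∀ n : ℕ, 2 ≤ n → ∀ S : ℕ, 1 ≤ S → ∀ q : Fin S → ℝ, IsDist q →
        ∃ est : (Fin S → ℕ) → ℝ,
          ∀ p : Fin S → ℝ, IsDist p →
            risk n p (L1dist p q) est ≤
              ENNReal.ofReal (C *
                ((∑ i, min (q i) (Real.sqrt (q i / (n * Real.log n)))) ^ 2 +
                  Real.log n / (n : ℝ) ^ (1 - ε) + S / (n : ℝ) ^ β)) := by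
  set B : ℝ := 2 + 6 * Real.sqrt (2 / ε) with hB
  set D : ℝ := 3 + 2304 * Real.exp 5 / ε with hD
  have hB0 : 0 < B := by positivity
  have hD0 : 0 < D := by positivity
  refine ⟨B ^ 2 + 2 * D, by positivity, fun n hn S _ q hq => ?_⟩
  have hle1 : ∀ p : Fin S → ℝ, IsDist p → ∀ i, p i ≤ 1 := fun p hp i => by
    rw [← hp.2]
    exact Finset.single_le_sum (fun j _ => hp.1 j) (Finset.mem_univ i)
  have hc := fun i => coord ε hε0 hε1 n hn (q i) (hq.1 i) (hle1 q hq i)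
  choose f hf using hc
  refine ⟨fun x => ∑ i, f i (x i), fun p hp => ?_⟩
  let r : Fin S → NNReal := fun i => ⟨n * p i, mul_nonneg (Nat.cast_nonneg n) (hp.1 i)⟩
  have hr : ∀ i, (r i : ℝ) = n * p i := fun i => rfl
  have hfi := fun i => hf i (p i) (r i) (hp.1 i) (hle1 p hp i) (hr i)
  rw [risk_eq n p r hr _ f fun i => (hfi i).1]
  apply ENNReal.ofReal_le_ofReal
  have hn0 : (0:ℝ) < n := by positivity
  have hlog : 0 ≤ Real.log n := Real.log_natCast_nonneg n
  set M := ∑ i, min (q i) (Real.sqrt (q i / (n * Real.log n))) with hM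
  set R := Real.log n / (n : ℝ) ^ (1 - ε) with hR
  have hR0 : 0 ≤ R := by positivity
  have h1 : |∑ i, ∫ x, f i x ∂(ProbabilityTheory.poissonMeasure (r i)) - L1dist p q| ≤ B * M := by
    unfold L1dist
    rw [← Finset.sum_sub_distrib, hM, Finset.mul_sum]
    exact (Finset.abs_sum_le_sum_abs _ _).trans (Finset.sum_le_sum fun i _ => (hfi i).2.1)
  have h2 : ∑ i, ProbabilityTheory.variance (f i) (ProbabilityTheory.poissonMeasure (r i)) ≤
      2 * D * R := by
    refine (Finset.sum_le_sum fun i _ => (hfi i).2.2).trans (le_of_eq ?_)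
    rw [← Finset.sum_mul, ← Finset.mul_sum, Finset.sum_add_distrib, hp.2, hq.2]
    ring
  have h3 : (∑ i, ∫ x, f i x ∂(ProbabilityTheory.poissonMeasure (r i)) - L1dist p q) ^ 2 ≤
      B ^ 2 * M ^ 2 := by
    rw [← sq_abs, ← mul_pow]
    exact pow_le_pow_left₀ (abs_nonneg _) h1 2
  have h4 : 0 ≤ (S : ℝ) / (n : ℝ) ^ β := by positivity
  have h5 : 0 ≤ 2 * D * M ^ 2 := by positivity
  have h6 : 0 ≤ B ^ 2 * R := by positivity
  have h7 : 0 ≤ (B ^ 2 + 2 * D) * ((S : ℝ) / (n : ℝ) ^ β) := by positivity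
  nlinarith
end
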